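/- Let F₂ = ⟨a,b⟩ be the free group of rank two, viewed as the group of inner automorphisms inside Aut(F₂). There exists a transversal T for the left cosets of F₂ in Aut(F₂) such that for the word w = a b a² b² ⋯ aⁿ bⁿ, where n > 101, the set {η(w) : η ∈ T} satisfies the C'(1/6) cancellation property. -/

import Mathlib

open MeasureTheory

namespace IRSPaper


/-! ## Basic setup: the space of subgroups, invariant random subgroups -/

/-- The conjugation action of a group on its space of subgroups: `g • H = gHg⁻¹`. -/
def conjSub {G : Type*} [Group G] (g : G) (H : Subgroup G) : Subgroup G :=
  Subgroup.map ((MulAut.conj g).toMonoidHom) H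

/-- The topology on the space of subgroups of `G`, induced from the product topology
on `G → Bool` (i.e. the topology of `2^G`). -/
noncomputable instance instTopSub (G : Type*) [Group G] : TopologicalSpace (Subgroup G) :=
  TopologicalSpace.induced
    (fun (H : Subgroup G) (g : G) => @decide (g ∈ H) (Classical.dec _)) inferInstance

/-- The Borel σ-algebra on the space of subgroups. -/
noncomputable instance instMeasSub (G : Type*) [Group G] : MeasurableSpace (Subgroup G) :=
  borel _

instance instBorelSub (G : Type*) [Group G] : BorelSpace (Subgroup G) := ⟨rfl⟩

/-- An invariant random subgroup: a Borel probability measure on `Sub(G)` which is invariant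
under the conjugation action of `G`. -/
def IsIRS {G : Type*} [Group G] (θ : Measure (Subgroup G)) : Prop :=
  IsProbabilityMeasure θ ∧ ∀ g : G, Measure.map (conjSub g) θ = θ

/-- The basic set `N_F = {H ∈ Sub(G) : F ⊆ H}`. -/
def NSet {G : Type*} [Group G] (F : Set G) : Set (Subgroup G) :=
  {H : Subgroup G | F ⊆ (H : Set G)}

/-- For `Γ ≤ Δ` and `S ⊆ Δ`, the set of subgroups of `Γ` containing every element of `Γ`
whose image in `Δ` lies in `S`.  When `S = t⁻¹Ft ⊆ Γ`, this is exactly the basic set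
`N_{t⁻¹Ft}^Γ ⊆ Sub(Γ)`. -/
def NpullSet {Δ : Type*} [Group Δ] (Γ : Subgroup Δ) (S : Set Δ) : Set (Subgroup ↥Γ) :=
  {Λ : Subgroup ↥Γ | ∀ x : ↥Γ, (x : Δ) ∈ S → x ∈ Λ}

/-- `T` is a transversal for the left cosets `Δ/Γ`: each left coset `dΓ` contains exactly
one element of `T`. -/
def IsLeftTransversal {Δ : Type*} [Group Δ] (Γ : Subgroup Δ) (T : Set Δ) : Prop :=
  ∀ d : Δ, ∃! t : Δ, t ∈ T ∧ d⁻¹ * t ∈ Γ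

/-- The defining property of the co-induced invariant random subgroup
`ν = CIND_Γ^Δ(θ)` (with respect to the transversal `T`):  for every finite `F ⊆ Δ`,
`ν(N_F) = 0` if `F ⊄ core_Δ(Γ)` and `ν(N_F) = ∏_{t ∈ T} θ(N_{t⁻¹Ft}^Γ)` if `F ⊆ core_Δ(Γ)`. -/
def CindSpec {Δ : Type*} [Group Δ] (Γ : Subgroup Δ) (T : Set Δ)
    (θ : Measure (Subgroup ↥Γ)) (ν : Measure (Subgroup Δ)) : Prop :=
  ∀ F : Finset Δ,
    (¬ (F : Set Δ) ⊆ (Γ.normalCore : Set Δ) → ν (NSet (F : Set Δ)) = 0) ∧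
    ((F : Set Δ) ⊆ (Γ.normalCore : Set Δ) →
      ν (NSet (F : Set Δ)) =
        ∏' t : T, θ (NpullSet Γ ((fun d => (t : Δ)⁻¹ * d * (t : Δ)) '' (F : Set Δ))))

/-- Ergodicity of a (not necessarily probability-) measure-preserving action given by
an explicit family of maps: every invariant measurable set is null or conull. -/
def ErgodicAct {G α : Type*} [MeasurableSpace α] (act : G → α → α) (μ : Measure α) : Prop :=
  ∀ s : Set α, MeasurableSet s → (∀ g : G, act g ⁻¹' s = s) → μ s = 0 ∨ μ sᶜ = 0

/-- Weak mixing of an action: the diagonal action on the square is ergodic. -/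
def WeaklyMixingAct {G α : Type*} [MeasurableSpace α] (act : G → α → α) (μ : Measure α) : Prop :=
  ErgodicAct (fun (g : G) (p : α × α) => (act g p.1, act g p.2)) (μ.prod μ)

/-- A measure is non-atomic (has no atoms) if every singleton is null. -/
def NonAtomicMeasure {α : Type*} [MeasurableSpace α] (μ : Measure α) : Prop :=
  ∀ x : α, μ {x} = 0

/-- The kernel of an IRS `θ` of `Γ`: the set of `γ ∈ Γ` with `θ(N_γ) = 1`.  (For a probability
measure this set is a subgroup; taking `Subgroup.closure` makes it a `Subgroup` on the nose.) -/
def kerIRS {Δ : Type*} [Group Δ] (Γ : Subgroup Δ) (θ : Measure (Subgroup ↥Γ)) : Subgroup ↥Γ :=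
  Subgroup.closure {x : ↥Γ | θ {Λ : Subgroup ↥Γ | x ∈ Λ} = 1}

/-- `core_Δ(ker(θ))`, viewed as a subgroup of `Δ`. -/
def coreKer {Δ : Type*} [Group Δ] (Γ : Subgroup Δ) (θ : Measure (Subgroup ↥Γ)) : Subgroup Δ :=
  ((kerIRS Γ θ).map Γ.subtype).normalCore

/-! ## The free group `F₂`, small cancellation notions -/

/-- The free group on two generators. -/
abbrev F2 : Type := FreeGroup Bool

/-- The first generator `a` of `F₂`. -/
def genA : F2 := FreeGroup.of true

/-- The second generator `b` of `F₂`. -/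
def genB : F2 := FreeGroup.of false

/-- The length `|x|` of the reduced word representing `x`. -/
def flen (x : F2) : ℕ := x.toWord.length

/-- `x` is cyclically reduced iff it has minimal length in its conjugacy class. -/
def CyclRed (x : F2) : Prop := ∀ g : F2, flen x ≤ flen (g * x * g⁻¹)

/-- The length `‖x‖` of the cyclically reduced word conjugate to `x`. -/
noncomputable def cyclen (x : F2) : ℕ := sInf (Set.range fun g : F2 => flen (g * x * g⁻¹))

/-- `u` is an initial segment (prefix) of the reduced word of `x`. -/
def IsInitSeg (u x : F2) : Prop := ∃ v : F2, x = u * v ∧ flen x = flen u + flen v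

/-- `S̃`: the set of all cyclically reduced cyclic conjugates of the words in `S` and of their
inverses.  (The cyclically reduced cyclic conjugates of a word `s` are exactly the cyclically
reduced elements of the conjugacy class of `s`.) -/
def tildeSet (S : Set F2) : Set F2 :=
  {y : F2 | CyclRed y ∧ ∃ s ∈ S, IsConj s y ∨ IsConj s⁻¹ y}

/-- The `C'(1/6)` small cancellation property for a set of words `S ⊆ F₂`. -/
def C'sixth (S : Set F2) : Prop :=
  ∀ x ∈ tildeSet S, ∀ y ∈ tildeSet S, x ≠ y →
    ∀ u : F2, IsInitSeg u x → IsInitSeg u y → 6 * flen u < min (flen x) (flen y)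

/-- The word `w = a b a² b² ⋯ aⁿ bⁿ`. -/
def wordW (n : ℕ) : F2 :=
  ((List.range n).map (fun i => genA ^ (i + 1) * genB ^ (i + 1))).prod

/-- The group of inner automorphisms of `F₂`, as a subgroup of `Aut(F₂)`;
this is the image of `F₂` in `Aut(F₂)`, identified with `F₂` itself. -/
def innerF2 : Subgroup (MulAut F2) := (MulAut.conj : F2 →* MulAut F2).range

/-!
The property holds for the images of `w` under any set of automorphisms. After composition with an
inner automorphism, `η` is a positive automorphism up to signed permutations of the generators on
both sides. Such an `η` loses at most `C = |η a| + |η b|` letters when the images of two parts of a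
reduced word are multiplied, whereas the cyclic length of `η w` is about `C n² / 2`. If conjugates
of `η w` and `η' w` have a common prefix of one sixth of that length, then, pulling back by `η`, the
axes of conjugates of `w` and of `η⁻¹ η' w` share a segment of about `6 n` letters. It contains a
pattern `b aⁱ bⁱ aⁱ⁺¹` with `i ≥ 9`, and `η'⁻¹ η`, made tame as above, sends the pattern to another
segment of `⋯ w w w ⋯`. The cube of a primitive element occurs in `⋯ w w w ⋯` only if that element
is a letter, so this automorphism permutes the generators and their inverses. Finally, the pattern
determines its position in `⋯ w w w ⋯` modulo `|w|` and occurs there neither backwards nor with `a`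
and `b` exchanged, so the two conjugates coincide.
-/

/-! ### The word metric of a free group -/

section WordMetric

variable {α : Type*}

lemma isReduced_invRev {L : List (α × Bool)} (hL : FreeGroup.IsReduced L) :
    FreeGroup.IsReduced (FreeGroup.invRev L) := by
  classical rw [FreeGroup.isReduced_iff_reduce_eq, FreeGroup.reduce_invRev, hL.reduce_eq]

lemma isReduced_invRev_cons_append_cons {s t : α × Bool} {L M : List (α × Bool)} (hst : s ≠ t)
    (hL : FreeGroup.IsReduced (s :: L)) (hM : FreeGroup.IsReduced (t :: M)) :
    FreeGroup.IsReduced (FreeGroup.invRev (s :: L) ++ t :: M) := by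
  refine List.isChain_append.2 ⟨isReduced_invRev hL, hM, ?_⟩
  simp only [FreeGroup.invRev, List.map_cons, List.reverse_cons, List.getLast?_concat,
    Option.mem_def, Option.some.injEq, List.head?_cons, forall_eq']
  intro hfst
  by_contra hsnd
  exact hst (Prod.ext hfst (by simpa using hsnd))

variable [DecidableEq α]

/-- The length of the longest common prefix of two lists. -/
def commonPrefixLength {β : Type*} [DecidableEq β] : List β → List β → ℕ
  | x :: xs, y :: ys => if x = y then commonPrefixLength xs ys + 1 else 0
  | _, _ => 0

lemma commonPrefixLength_nil_left {β : Type*} [DecidableEq β] (l : List β) :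
    commonPrefixLength [] l = 0 := by
  cases l <;> rfl

lemma commonPrefixLength_nil_right {β : Type*} [DecidableEq β] (l : List β) :
    commonPrefixLength l [] = 0 := by
  cases l <;> rfl

lemma min_commonPrefixLength_le {β : Type*} [DecidableEq β] :
    ∀ l₁ l₂ l₃ : List β,
      min (commonPrefixLength l₁ l₂) (commonPrefixLength l₂ l₃) ≤ commonPrefixLength l₁ l₃
  | [], l₂, l₃ => by simp [commonPrefixLength_nil_left]
  | l₁, [], l₃ => by simp [commonPrefixLength_nil_right]
  | l₁, l₂, [] => by simp [commonPrefixLength_nil_right]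
  | x :: xs, y :: ys, z :: zs => by
    have ih := min_commonPrefixLength_le xs ys zs
    simp only [commonPrefixLength]
    by_cases hxy : x = y <;> by_cases hyz : y = z <;> simp_all

lemma norm_mk_of_isReduced {L : List (α × Bool)} (hL : FreeGroup.IsReduced L) :
    (FreeGroup.mk L).norm = L.length := by
  rw [FreeGroup.norm, FreeGroup.toWord_mk, hL.reduce_eq]

lemma toWord_mul_of_norm_mul {x y : FreeGroup α} (h : (x * y).norm = x.norm + y.norm) :
    (x * y).toWord = x.toWord ++ y.toWord :=
  (FreeGroup.toWord_mul_sublist x y).eq_of_length (by simpa [FreeGroup.norm] using h)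

lemma norm_inv_mk_mul_mk : ∀ {L M : List (α × Bool)},
    FreeGroup.IsReduced L → FreeGroup.IsReduced M →
    ((FreeGroup.mk L)⁻¹ * FreeGroup.mk M).norm + 2 * commonPrefixLength L M =
      L.length + M.length
  | [], M, _, hM => by
    simp [commonPrefixLength_nil_left, ← FreeGroup.one_eq_mk, norm_mk_of_isReduced hM]
  | L, [], hL, _ => by
    simp [commonPrefixLength_nil_right, ← FreeGroup.one_eq_mk, norm_mk_of_isReduced hL,
      -FreeGroup.inv_mk]
  | s :: L, t :: M, hL, hM => by
    by_cases hst : s = t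
    · subst hst
      have ih := norm_inv_mk_mul_mk hL.tail hM.tail
      have cancel : (FreeGroup.mk (s :: L))⁻¹ * FreeGroup.mk (s :: M) =
          (FreeGroup.mk L)⁻¹ * FreeGroup.mk M := by
        rw [← List.singleton_append (l := L), ← List.singleton_append (l := M),
          ← FreeGroup.mul_mk, ← FreeGroup.mul_mk]
        group
      simp only [cancel, commonPrefixLength, if_true, List.length_cons, List.tail_cons] at ih ⊢
      lia
    · rw [FreeGroup.inv_mk, FreeGroup.mul_mk,
        norm_mk_of_isReduced (isReduced_invRev_cons_append_cons hst hL hM)]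
      simp [commonPrefixLength, hst]

/-- The word metric on a free group, i.e. the path metric on the vertices of its Cayley tree. -/
def wdist (p q : FreeGroup α) : ℕ := (p⁻¹ * q).norm

lemma wdist_add_two_mul_commonPrefixLength (p q : FreeGroup α) :
    wdist p q + 2 * commonPrefixLength p.toWord q.toWord = p.norm + q.norm := by
  simpa [FreeGroup.mk_toWord, wdist, FreeGroup.norm] using
    norm_inv_mk_mul_mk (FreeGroup.isReduced_toWord (x := p)) (FreeGroup.isReduced_toWord (x := q))

lemma one_wdist (q : FreeGroup α) : wdist 1 q = q.norm := by simp [wdist]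

lemma wdist_self (p : FreeGroup α) : wdist p p = 0 := by simp [wdist]

lemma wdist_comm (p q : FreeGroup α) : wdist p q = wdist q p := by
  rw [wdist, ← FreeGroup.norm_inv_eq]
  simp [wdist]

lemma wdist_mul_left (g p q : FreeGroup α) : wdist (g * p) (g * q) = wdist p q := by
  simp [wdist, mul_assoc]

lemma wdist_self_mul (p q : FreeGroup α) : wdist p (p * q) = q.norm := by simp [wdist]

lemma wdist_triangle (p q r : FreeGroup α) : wdist p r ≤ wdist p q + wdist q r := by
  simpa [wdist, mul_assoc] using FreeGroup.norm_mul_le (p⁻¹ * q) (q⁻¹ * r)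

lemma wdist_eq_zero {p q : FreeGroup α} : wdist p q = 0 ↔ p = q := by
  rw [wdist, FreeGroup.norm_eq_zero, inv_mul_eq_one]

lemma even_norm_mul_add (p q : FreeGroup α) : Even ((p * q).norm + (p.norm + q.norm)) := by
  have h := wdist_add_two_mul_commonPrefixLength p⁻¹ q
  rw [wdist, inv_inv, FreeGroup.norm_inv_eq] at h
  exact ⟨(p * q).norm + commonPrefixLength p⁻¹.toWord q.toWord, by lia⟩

lemma wdist_add_wdist_le (p q r s : FreeGroup α) :
    wdist p q + wdist r s ≤ max (wdist p r + wdist q s) (wdist p s + wdist q r) := by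
  wlog hp : p = 1 generalizing p q r s
  · simpa only [wdist_mul_left] using this (p⁻¹ * p) (p⁻¹ * q) (p⁻¹ * r) (p⁻¹ * s) (by simp)
  subst hp
  have hrs := wdist_add_two_mul_commonPrefixLength r s
  have hrq := wdist_add_two_mul_commonPrefixLength r q
  have hqs := wdist_add_two_mul_commonPrefixLength q s
  have hmin := min_commonPrefixLength_le r.toWord q.toWord s.toWord
  rw [wdist_comm r q] at hrq
  simp only [one_wdist]
  lia

/-- The vertex `v` lies on the geodesic from `p` to `q`. -/
def Between (p v q : FreeGroup α) : Prop := wdist p v + wdist v q = wdist p q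

lemma Between.symm {p v q : FreeGroup α} (h : Between p v q) : Between q v p := by
  rw [Between, wdist_comm q v, wdist_comm v p, wdist_comm q p, add_comm]
  exact h

lemma Between.mul_left {p v q : FreeGroup α} (h : Between p v q) (g : FreeGroup α) :
    Between (g * p) (g * v) (g * q) := by
  simpa only [Between, wdist_mul_left] using h

lemma Between.wdist_add {p q v v' : FreeGroup α} (h : Between p v q) (h' : Between p v' q)
    (hle : wdist p v ≤ wdist p v') : wdist p v + wdist v v' = wdist p v' := by
  have h4 := wdist_add_wdist_le p q v v'
  have htri := wdist_triangle p v v'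
  rw [wdist_comm q v, wdist_comm q v'] at h4
  unfold Between at h h'
  lia

lemma between_one_mul {p q : FreeGroup α} :
    Between 1 p (p * q) ↔ (p * q).norm = p.norm + q.norm := by
  rw [Between, one_wdist, one_wdist, wdist_self_mul, eq_comm]

lemma exists_mul_eq_norm_eq (g : FreeGroup α) {k : ℕ} (hk : k ≤ g.norm) :
    ∃ p q : FreeGroup α, p * q = g ∧ p.norm = k ∧ p.norm + q.norm = g.norm := by
  have hred : FreeGroup.IsReduced g.toWord := FreeGroup.isReduced_toWord
  have hlen : g.toWord.length = g.norm := rfl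
  refine ⟨.mk (g.toWord.take k), .mk (g.toWord.drop k), ?_, ?_, ?_⟩
  · rw [FreeGroup.mul_mk, List.take_append_drop, FreeGroup.mk_toWord]
  · rw [norm_mk_of_isReduced (hred.take k), List.length_take]
    lia
  · rw [norm_mk_of_isReduced (hred.take k), norm_mk_of_isReduced (hred.drop k), List.length_take,
      List.length_drop]
    lia

/-- Geodesics from `p` to `q` and to `r` agree up to the Gromov product of `q` and `r`. -/
lemma Between.of_two_mul_wdist_add_le {p v q r : FreeGroup α} (h : Between p v q)
    (hle : 2 * wdist p v + wdist q r ≤ wdist p q + wdist p r) : Between p v r := by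
  have h4 := wdist_add_wdist_le p q v r
  have htri := wdist_triangle p v r
  rw [wdist_comm q v] at h4
  unfold Between at h ⊢
  lia

lemma norm_mul_mul_add {x y z : FreeGroup α}
    (h : x.norm + z.norm < (x * y).norm + (y * z).norm) :
    (x * y * z).norm + y.norm = (x * y).norm + (y * z).norm := by
  have h₁ := wdist_add_wdist_le 1 (y * z) x⁻¹ y
  have h₂ := wdist_add_wdist_le 1 y x⁻¹ (y * z)
  have hxyz : wdist x⁻¹ (y * z) = (x * y * z).norm := by simp [wdist, mul_assoc]
  have hxy : wdist x⁻¹ y = (x * y).norm := by simp [wdist]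
  rw [wdist_comm (y * z) y, wdist_comm (y * z) x⁻¹] at h₁
  rw [wdist_comm y x⁻¹] at h₂
  simp only [one_wdist, wdist_self_mul, FreeGroup.norm_inv_eq, hxyz, hxy] at h₁ h₂
  lia

/-- The translation length of `x` on the Cayley tree, i.e. the length of its cyclic reduction. -/
def translationLength (x : FreeGroup α) : ℕ :=
  (FreeGroup.reduceCyclically x.toWord).length

lemma norm_pow_succ (x : FreeGroup α) (k : ℕ) :
    (x ^ (k + 1)).norm = k * translationLength x + x.norm := by
  have hred : FreeGroup.IsReduced x.toWord := FreeGroup.isReduced_toWord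
  have hx := congrArg List.length
    (FreeGroup.reduceCyclically.conj_conjugator_reduceCyclically x.toWord)
  have hpow := congrArg List.length
    (FreeGroup.reduceCyclically.reduce_flatten_replicate_succ hred k)
  rw [← FreeGroup.toWord_pow] at hpow
  simp only [List.length_append, List.length_flatten, List.map_replicate, List.sum_replicate,
    smul_eq_mul, FreeGroup.invRev_length] at hx hpow
  rw [FreeGroup.norm, FreeGroup.norm, hpow, ← hx, translationLength]
  ring

lemma translationLength_conj_le (g x : FreeGroup α) :
    translationLength (g * x * g⁻¹) ≤ translationLength x := by
  by_contra! hlt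
  set k := x.norm + 2 * g.norm + 1 with hk
  have h₁ := FreeGroup.norm_mul_le (g * x ^ (k + 1)) g⁻¹
  have h₂ := FreeGroup.norm_mul_le g (x ^ (k + 1))
  rw [← conj_pow, norm_pow_succ, FreeGroup.norm_inv_eq] at h₁
  rw [norm_pow_succ] at h₂
  nlinarith

lemma translationLength_conj (g x : FreeGroup α) :
    translationLength (g * x * g⁻¹) = translationLength x := by
  refine (translationLength_conj_le g x).antisymm ?_
  have h := translationLength_conj_le g⁻¹ (g * x * g⁻¹)
  rwa [show g⁻¹ * (g * x * g⁻¹) * g⁻¹⁻¹ = x by group] at h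

lemma exists_norm_conj_eq_translationLength (x : FreeGroup α) :
    ∃ g : FreeGroup α, (g * x * g⁻¹).norm = translationLength x := by
  have hred : FreeGroup.IsReduced x.toWord := FreeGroup.isReduced_toWord
  have hcore := FreeGroup.reduceCyclically.isCyclicallyReduced hred
  refine ⟨(.mk (FreeGroup.reduceCyclically.conjugator x.toWord))⁻¹, ?_⟩
  have hx := congrArg FreeGroup.mk
    (FreeGroup.reduceCyclically.conj_conjugator_reduceCyclically x.toWord)
  rw [FreeGroup.mk_toWord, ← FreeGroup.mul_mk, ← FreeGroup.mul_mk, ← FreeGroup.inv_mk] at hx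
  nth_rewrite 2 [← hx]
  rw [translationLength, ← norm_mk_of_isReduced hcore.isReduced]
  congr 1
  group

lemma norm_pow_of_norm_sq {x : FreeGroup α} (h : (x ^ 2).norm = 2 * x.norm) (k : ℕ) :
    (x ^ k).norm = k * x.norm := by
  have hx : translationLength x = x.norm := by
    rw [norm_pow_succ x 1] at h
    lia
  cases k with
  | zero => simp
  | succ k => rw [norm_pow_succ, hx, Nat.succ_mul]

lemma translationLength_pos {x : FreeGroup α} (hx : x ≠ 1) : 0 < translationLength x := by
  by_contra h0
  obtain ⟨g, hg⟩ := exists_norm_conj_eq_translationLength x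
  rw [Nat.eq_zero_of_not_pos h0, FreeGroup.norm_eq_zero, conj_eq_one_iff] at hg
  exact hx hg

lemma add_norm_le_norm_pow_succ {x : FreeGroup α} (hx : x ≠ 1) (k : ℕ) :
    k + x.norm ≤ (x ^ (k + 1)).norm := by
  rw [norm_pow_succ]
  exact Nat.add_le_add_right (Nat.le_mul_of_pos_right k (translationLength_pos hx)) _

lemma norm_lt_norm_sq {x : FreeGroup α} (hx : x ≠ 1) : x.norm < (x ^ 2).norm := by
  have hpos := translationLength_pos hx
  rw [norm_pow_succ x 1]
  lia

lemma norm_lt_max_norm_mul {x y : FreeGroup α} (hy : y ≠ 1) :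
    x.norm < max (x * y).norm (y * x⁻¹).norm := by
  have hsq := norm_lt_norm_sq hy
  have h4 := wdist_add_wdist_le 1 x⁻¹ y y⁻¹
  have hxy : wdist x⁻¹ y = (x * y).norm := by simp [wdist]
  have hyx : wdist x⁻¹ y⁻¹ = (y * x⁻¹).norm := by rw [wdist_comm]; simp [wdist]
  have hyy : wdist y y⁻¹ = (y ^ 2).norm := by rw [wdist_comm, pow_two]; simp [wdist]
  simp only [one_wdist, FreeGroup.norm_inv_eq, hxy, hyx, hyy] at h4
  lia

/-- If exactly half of `y` cancels against `x` on either side, then conjugating by the first half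
of `y` makes the cancellation in `y * x` visible. -/
lemma exists_conj_norm_add_norm_le {x y : FreeGroup α} (hxy : (x * y).norm = x.norm)
    (hyx : (y * x).norm = x.norm) (hle : y.norm ≤ x.norm) :
    ∃ g : FreeGroup α, (g * y * g⁻¹).norm ≤ y.norm ∧
      (g * (y * x) * g⁻¹).norm + y.norm ≤ x.norm := by
  obtain ⟨m, hm⟩ : Even y.norm := by
    have := even_norm_mul_add x y
    rw [hxy, ← add_assoc] at this
    simpa [← two_mul, parity_simps] using this
  obtain ⟨s, z, rfl, hs, hsz⟩ := exists_mul_eq_norm_eq y (k := m) (by lia)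
  have hs_x : Between 1 s x⁻¹ := by
    refine (between_one_mul.2 hsz.symm).of_two_mul_wdist_add_le ?_
    rw [wdist_comm (s * z), one_wdist, one_wdist, one_wdist, wdist, inv_inv, FreeGroup.norm_inv_eq]
    lia
  have hxs : Between 1 (x * s) x := by simpa using (hs_x.mul_left x).symm
  have hz_x : Between 1 z⁻¹ x := by
    have hz : Between 1 z⁻¹ (z⁻¹ * s⁻¹) := by
      rw [between_one_mul, ← mul_inv_rev]
      simp only [FreeGroup.norm_inv_eq]
      lia
    refine hz.of_two_mul_wdist_add_le ?_
    rw [← mul_inv_rev, one_wdist, one_wdist, one_wdist, wdist, inv_inv, FreeGroup.norm_inv_eq,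
      FreeGroup.norm_inv_eq]
    lia
  refine ⟨s⁻¹, ?_, ?_⟩
  · have hconj : s⁻¹ * (s * z) * s⁻¹⁻¹ = z * s := by group
    have := FreeGroup.norm_mul_le z s
    rw [hconj]
    lia
  · have hconj : s⁻¹ * (s * z * x) * s⁻¹⁻¹ = z⁻¹⁻¹ * (x * s) := by group
    have hdist : wdist (x * s) x = m := by rw [wdist_comm, wdist_self_mul, hs]
    have hseg := hz_x.wdist_add hxs
    simp only [Between, one_wdist, FreeGroup.norm_inv_eq] at hxs hseg
    rw [hconj, ← wdist]
    lia

end WordMetric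

/-! ### Letters and positive words -/

section Letters

variable {α : Type*}

/-- The element of the free group given by a one-letter word. -/
def letter (l : α × Bool) : FreeGroup α := FreeGroup.mk [l]

lemma letter_true (c : α) : letter (c, true) = FreeGroup.of c := rfl

lemma letter_false (c : α) : letter (c, false) = (FreeGroup.of c)⁻¹ := rfl

lemma letter_inv (c : α) (s : Bool) : (letter (c, s))⁻¹ = letter (c, !s) := by
  simp [letter, FreeGroup.inv_mk, FreeGroup.invRev]

lemma letter_mul_mk (l : α × Bool) (L : List (α × Bool)) :
    letter l * FreeGroup.mk L = FreeGroup.mk (l :: L) := by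
  simp [letter, FreeGroup.mul_mk]

lemma isReduced_of_forall_snd {L : List (α × Bool)} (h : ∀ l ∈ L, l.2 = true) :
    FreeGroup.IsReduced L :=
  (List.pairwise_of_forall_mem_list (r := fun l m : α × Bool ↦ l.1 = m.1 → l.2 = m.2)
    fun l hl m hm _ ↦ (h l hl).trans (h m hm).symm).isChain

lemma letter_ne_one (l : α × Bool) : letter l ≠ 1 := by
  classical simp [letter, ← FreeGroup.norm_eq_zero, FreeGroup.norm, FreeGroup.toWord_mk]

variable [DecidableEq α]

lemma exists_letter_eq {x : FreeGroup α} (hx : x.norm = 1) : ∃ l, letter l = x := by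
  obtain ⟨l, hl⟩ := List.length_eq_one_iff.1 hx
  exact ⟨l, by rw [letter, ← hl, FreeGroup.mk_toWord]⟩

lemma toWord_letter_pow (l : α × Bool) (k : ℕ) :
    (letter l ^ k).toWord = List.replicate k l := by
  have hred : FreeGroup.IsReduced (List.replicate k l) :=
    List.isChain_replicate_of_rel k fun _ ↦ rfl
  have hpow : letter l ^ k = FreeGroup.mk (List.replicate k l) := by
    simp [letter, FreeGroup.pow_mk]
  rw [hpow, FreeGroup.toWord_mk, hred.reduce_eq]

lemma norm_letter_pow (l : α × Bool) (k : ℕ) : (letter l ^ k).norm = k := by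
  rw [FreeGroup.norm, toWord_letter_pow, List.length_replicate]

lemma norm_map_le {β : Type*} [DecidableEq β] {f : FreeGroup α →* FreeGroup β} {C : ℕ}
    (hf : ∀ c, (f (.of c)).norm ≤ C) (z : FreeGroup α) : (f z).norm ≤ z.norm * C := by
  have hletter : ∀ l, (f (letter l)).norm ≤ C := by
    rintro ⟨c, _ | _⟩
    · rw [letter_false, map_inv, FreeGroup.norm_inv_eq]
      exact hf c
    · exact hf c
  have hmk : ∀ L : List (α × Bool), (f (.mk L)).norm ≤ L.length * C := by
    intro L
    induction L with
    | nil => simp [← FreeGroup.one_eq_mk]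
    | cons l L ih =>
      rw [← letter_mul_mk, map_mul, List.length_cons, Nat.succ_mul, add_comm]
      exact (FreeGroup.norm_mul_le _ _).trans (add_le_add (hletter l) ih)
  have := hmk z.toWord
  rwa [FreeGroup.mk_toWord] at this

lemma toWord_mul_of_forall_snd {x y : FreeGroup α} (hx : ∀ l ∈ x.toWord, l.2 = true)
    (hy : ∀ l ∈ y.toWord, l.2 = true) : (x * y).toWord = x.toWord ++ y.toWord := by
  rw [FreeGroup.toWord_mul]
  refine (isReduced_of_forall_snd fun l hl ↦ ?_).reduce_eq
  exact (List.mem_append.1 hl).elim (hx l) (hy l)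

/-- The submonoid of positive words, in which no inverse of a generator occurs. -/
def positiveWords (α : Type*) [DecidableEq α] : Submonoid (FreeGroup α) where
  carrier := {x | ∀ l ∈ x.toWord, l.2 = true}
  one_mem' := by simp
  mul_mem' {x y} hx hy l hl := by
    rw [toWord_mul_of_forall_snd hx hy] at hl
    exact (List.mem_append.1 hl).elim (hx l) (hy l)

lemma of_mem_positiveWords (c : α) : FreeGroup.of c ∈ positiveWords α := by
  intro l hl
  rw [FreeGroup.toWord_of, List.mem_singleton] at hl
  rw [hl]

lemma norm_mul_of_mem_positiveWords {x y : FreeGroup α} (hx : x ∈ positiveWords α)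
    (hy : y ∈ positiveWords α) : (x * y).norm = x.norm + y.norm := by
  rw [FreeGroup.norm, toWord_mul_of_forall_snd hx hy, List.length_append]
  rfl

lemma norm_pow_of_mem_positiveWords {x : FreeGroup α} (hx : x ∈ positiveWords α) (k : ℕ) :
    (x ^ k).norm = k * x.norm :=
  norm_pow_of_norm_sq (by rw [pow_two, norm_mul_of_mem_positiveWords hx hx, two_mul]) k

end Letters

/-! ### Automorphisms of `F₂` -/

lemma norm_genA : genA.norm = 1 := FreeGroup.norm_of true

lemma norm_genB : genB.norm = 1 := FreeGroup.norm_of false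

lemma genA_ne_one : genA ≠ 1 := FreeGroup.of_ne_one true

lemma genB_ne_one : genB ≠ 1 := FreeGroup.of_ne_one false

lemma genA_mem_positiveWords : genA ∈ positiveWords Bool := of_mem_positiveWords true

lemma genB_mem_positiveWords : genB ∈ positiveWords Bool := of_mem_positiveWords false

lemma hom_ext_gen {G : Type*} [Group G] {f g : F2 →* G} (hA : f genA = g genA)
    (hB : f genB = g genB) : f = g := by
  ext c
  cases c
  exacts [hB, hA]

lemma aut_ext_gen {η η' : MulAut F2} (hA : η genA = η' genA) (hB : η genB = η' genB) : η = η' :=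
  MulEquiv.toMonoidHom_injective (hom_ext_gen hA hB)

lemma aut_mul_conj {G : Type*} [Group G] (η : MulAut G) (g : G) :
    η * MulAut.conj g = MulAut.conj (η g) * η := by
  ext x
  simp

/-- The endomorphism of `F₂` with `a ↦ x` and `b ↦ y`. -/
def homOfGens (x y : F2) : F2 →* F2 := FreeGroup.lift fun c ↦ if c then x else y

lemma homOfGens_genA (x y : F2) : homOfGens x y genA = x := by simp [homOfGens, genA]

lemma homOfGens_genB (x y : F2) : homOfGens x y genB = y := by simp [homOfGens, genB]

/-- The automorphism `a ↦ b`, `b ↦ a`. -/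
def swap : MulAut F2 :=
  MonoidHom.toMulEquiv (homOfGens genB genA) (homOfGens genB genA)
    (hom_ext_gen (by simp [homOfGens_genA, homOfGens_genB])
      (by simp [homOfGens_genA, homOfGens_genB]))
    (hom_ext_gen (by simp [homOfGens_genA, homOfGens_genB])
      (by simp [homOfGens_genA, homOfGens_genB]))

/-- The automorphism `a ↦ a⁻¹`, `b ↦ b`. -/
def flipA : MulAut F2 :=
  MonoidHom.toMulEquiv (homOfGens genA⁻¹ genB) (homOfGens genA⁻¹ genB)
    (hom_ext_gen (by simp [homOfGens_genA]) (by simp [homOfGens_genB]))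
    (hom_ext_gen (by simp [homOfGens_genA]) (by simp [homOfGens_genB]))

/-- The automorphism `a ↦ a`, `b ↦ b⁻¹`. -/
def flipB : MulAut F2 :=
  MonoidHom.toMulEquiv (homOfGens genA genB⁻¹) (homOfGens genA genB⁻¹)
    (hom_ext_gen (by simp [homOfGens_genA]) (by simp [homOfGens_genB]))
    (hom_ext_gen (by simp [homOfGens_genA]) (by simp [homOfGens_genB]))

/-- The elementary Nielsen automorphism `a ↦ a`, `b ↦ ab`. -/
def twist : MulAut F2 :=
  MonoidHom.toMulEquiv (homOfGens genA (genA * genB)) (homOfGens genA (genA⁻¹ * genB))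
    (hom_ext_gen (by simp [homOfGens_genA]) (by simp [homOfGens_genA, homOfGens_genB]))
    (hom_ext_gen (by simp [homOfGens_genA]) (by simp [homOfGens_genA, homOfGens_genB]))

@[simp] lemma swap_genA : swap genA = genB := by simp [swap, homOfGens_genA]

@[simp] lemma swap_genB : swap genB = genA := by simp [swap, homOfGens_genB]

@[simp] lemma flipA_genA : flipA genA = genA⁻¹ := by simp [flipA, homOfGens_genA]

@[simp] lemma flipA_genB : flipA genB = genB := by simp [flipA, homOfGens_genB]

@[simp] lemma flipB_genA : flipB genA = genA := by simp [flipB, homOfGens_genA]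

@[simp] lemma flipB_genB : flipB genB = genB⁻¹ := by simp [flipB, homOfGens_genB]

@[simp] lemma twist_genA : twist genA = genA := by simp [twist, homOfGens_genA]

@[simp] lemma twist_genB : twist genB = genA * genB := by simp [twist, homOfGens_genB]

lemma swap_mul_swap : swap * swap = 1 := aut_ext_gen (by simp) (by simp)

lemma flipA_mul_flipA : flipA * flipA = 1 := aut_ext_gen (by simp) (by simp)

lemma flipB_mul_flipB : flipB * flipB = 1 := aut_ext_gen (by simp) (by simp)

/-- The length-preserving automorphisms of a free group, i.e. the signed permutations of its
basis. -/
def normPreserving (α : Type*) [DecidableEq α] : Subgroup (MulAut (FreeGroup α)) where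
  carrier := {ε | ∀ z, (ε z).norm = z.norm}
  one_mem' _ := rfl
  mul_mem' {ε δ} hε hδ z := (hε (δ z)).trans (hδ z)
  inv_mem' {ε} hε z := by simpa using (hε (ε⁻¹ z)).symm

lemma wdist_map_of_mem_normPreserving {α : Type*} [DecidableEq α] {ε : MulAut (FreeGroup α)}
    (hε : ε ∈ normPreserving α) (p q : FreeGroup α) : wdist (ε p) (ε q) = wdist p q := by
  rw [wdist, ← map_inv, ← map_mul, hε, wdist]

lemma mem_normPreserving_of_mul_self {ε : MulAut F2} (hA : (ε genA).norm = 1)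
    (hB : (ε genB).norm = 1) (hε : ε * ε = 1) : ε ∈ normPreserving Bool := by
  have hle : ∀ z, (ε z).norm ≤ z.norm := fun z ↦ by
    have hgen : ∀ c, (ε.toMonoidHom (.of c)).norm ≤ 1 := by
      rintro (_ | _)
      exacts [hB.le, hA.le]
    simpa using norm_map_le hgen z
  refine fun z ↦ le_antisymm (hle z) ?_
  simpa [← MulAut.mul_apply, hε] using hle (ε z)

lemma swap_mem_normPreserving : swap ∈ normPreserving Bool :=
  mem_normPreserving_of_mul_self (by simp [norm_genB]) (by simp [norm_genA]) swap_mul_swap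

lemma flipA_mem_normPreserving : flipA ∈ normPreserving Bool :=
  mem_normPreserving_of_mul_self (by simp [norm_genA]) (by simp [norm_genB]) flipA_mul_flipA

lemma flipB_mem_normPreserving : flipB ∈ normPreserving Bool :=
  mem_normPreserving_of_mul_self (by simp [norm_genA]) (by simp [norm_genB]) flipB_mul_flipB

/-- The automorphism which maps `a` to the letter `(c, s)` and `b` to the letter `(!c, s')`. -/
def signedPerm (c s s' : Bool) : MulAut F2 :=
  (if c then 1 else swap) * ((if s then 1 else flipA) * (if s' then 1 else flipB))

lemma signedPerm_mem_normPreserving (c s s' : Bool) : signedPerm c s s' ∈ normPreserving Bool := by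
  refine mul_mem ?_ (mul_mem ?_ ?_) <;> split_ifs
  exacts [one_mem _, swap_mem_normPreserving, one_mem _, flipA_mem_normPreserving, one_mem _,
    flipB_mem_normPreserving]

lemma signedPerm_genA (c s s' : Bool) : signedPerm c s s' genA = letter (c, s) := by
  cases c <;> cases s <;> cases s' <;> simp [signedPerm] <;> rfl

lemma signedPerm_genB (c s s' : Bool) : signedPerm c s s' genB = letter (!c, s') := by
  cases c <;> cases s <;> cases s' <;> simp [signedPerm] <;> rfl

lemma exists_eq_signedPerm {ε : MulAut F2} (hA : (ε genA).norm = 1) (hB : (ε genB).norm = 1) :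
    ∃ c s s', ε = signedPerm c s s' := by
  obtain ⟨⟨c, s⟩, hcs⟩ := exists_letter_eq hA
  obtain ⟨⟨c', s'⟩, hcs'⟩ := exists_letter_eq hB
  have hc : c' = !c := by
    by_contra hc
    obtain rfl : c' = c := by simpa using hc
    have hne : ε genA ≠ ε genB := ε.injective.ne (by decide)
    have hne_inv : ε genA ≠ (ε genB)⁻¹ := map_inv ε genB ▸ ε.injective.ne (by decide)
    rw [← hcs, ← hcs'] at hne hne_inv
    rw [letter_inv] at hne_inv
    cases s <;> cases s' <;> simp at hne hne_inv
  subst hc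
  exact ⟨c, s, s', aut_ext_gen (by rw [signedPerm_genA, hcs]) (by rw [signedPerm_genB, hcs'])⟩

lemma mem_normPreserving_of_norm_gen {ε : MulAut F2} (hA : (ε genA).norm = 1)
    (hB : (ε genB).norm = 1) : ε ∈ normPreserving Bool := by
  obtain ⟨c, s, s', rfl⟩ := exists_eq_signedPerm hA hB
  exact signedPerm_mem_normPreserving c s s'

/-- The monoid of positive automorphisms, generated by `swap` and `twist`. -/
def positiveAuts : Submonoid (MulAut F2) := Submonoid.closure {swap, twist}

lemma swap_mem_positiveAuts : swap ∈ positiveAuts := Submonoid.subset_closure (by simp)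

lemma twist_mem_positiveAuts : twist ∈ positiveAuts := Submonoid.subset_closure (by simp)

@[elab_as_elim]
lemma positiveAuts_induction {P : (φ : MulAut F2) → φ ∈ positiveAuts → Prop}
    (one : P 1 (one_mem _))
    (mul_swap : ∀ φ hφ, P φ hφ → P (φ * swap) (mul_mem hφ swap_mem_positiveAuts))
    (mul_twist : ∀ φ hφ, P φ hφ → P (φ * twist) (mul_mem hφ twist_mem_positiveAuts))
    {φ : MulAut F2} (hφ : φ ∈ positiveAuts) : P φ hφ := by
  induction hφ using Submonoid.closure_induction_right with
  | one => exact one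
  | mul_right ψ hψ y hy ih =>
    rcases hy with rfl | rfl
    exacts [mul_swap ψ hψ ih, mul_twist ψ hψ ih]

/-- `η` is, up to an inner automorphism, a positive automorphism composed with signed permutations
on either side. -/
def HasNormalForm (η : MulAut F2) : Prop :=
  ∃ g : F2, ∃ σ ∈ normPreserving Bool, ∃ φ ∈ positiveAuts, ∃ ε ∈ normPreserving Bool,
    η = MulAut.conj g * (σ * φ * ε)

lemma hasNormalForm_of_mem_positiveAuts {φ : MulAut F2} (hφ : φ ∈ positiveAuts) :
    HasNormalForm φ :=
  ⟨1, 1, one_mem _, φ, hφ, 1, one_mem _, by simp⟩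

namespace HasNormalForm

variable {η : MulAut F2}

lemma conj_mul (h : HasNormalForm η) (g : F2) : HasNormalForm (MulAut.conj g * η) := by
  obtain ⟨g', σ, hσ, φ, hφ, ε, hε, rfl⟩ := h
  exact ⟨g * g', σ, hσ, φ, hφ, ε, hε, by simp only [map_mul, mul_assoc]⟩

lemma normPreserving_mul (h : HasNormalForm η) {δ : MulAut F2} (hδ : δ ∈ normPreserving Bool) :
    HasNormalForm (δ * η) := by
  obtain ⟨g, σ, hσ, φ, hφ, ε, hε, rfl⟩ := h
  exact ⟨δ g, δ * σ, mul_mem hδ hσ, φ, hφ, ε, hε, by simp only [← mul_assoc, aut_mul_conj]⟩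

lemma mul_normPreserving (h : HasNormalForm η) {δ : MulAut F2} (hδ : δ ∈ normPreserving Bool) :
    HasNormalForm (η * δ) := by
  obtain ⟨g, σ, hσ, φ, hφ, ε, hε, rfl⟩ := h
  exact ⟨g, σ, hσ, φ, hφ, ε * δ, mul_mem hε hδ, by simp only [mul_assoc]⟩

lemma mul_conj_mul {φ ψ : MulAut F2} (h : HasNormalForm (φ * ψ)) (g : F2) :
    HasNormalForm (φ * (MulAut.conj g * ψ)) := by
  rw [← mul_assoc, aut_mul_conj, mul_assoc]
  exact h.conj_mul _

end HasNormalForm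

@[simp] lemma twist_symm_genA : twist.symm genA = genA := by simp [MulEquiv.symm_apply_eq]

@[simp] lemma twist_symm_genB : twist.symm genB = genA⁻¹ * genB := by
  simp [MulEquiv.symm_apply_eq]

lemma twist_inv_eq : twist⁻¹ = flipA * twist * flipA :=
  aut_ext_gen (by simp [mul_assoc]) (by simp [mul_assoc])

lemma twist_mul_swap_mul_twist_inv :
    twist * swap * twist⁻¹ = MulAut.conj genB⁻¹ * (swap * twist * swap * flipB) :=
  aut_ext_gen (by simp [mul_assoc]) (by simp [mul_assoc])

lemma flipA_mul_twist_inv : flipA * twist⁻¹ = twist * flipA :=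
  aut_ext_gen (by simp) (by simp)

lemma flipB_mul_twist_inv : flipB * twist⁻¹ = MulAut.conj genA⁻¹ * (twist * flipB) :=
  aut_ext_gen (by simp) (by simp [mul_assoc])

lemma flipA_mul_flipB_mul_twist_inv :
    flipA * flipB * twist⁻¹ = MulAut.conj genA * (twist⁻¹ * (flipA * flipB)) :=
  aut_ext_gen (by simp [mul_assoc]) (by simp [mul_assoc])

lemma hasNormalForm_mul_twist_inv {φ : MulAut F2} (hφ : φ ∈ positiveAuts) :
    HasNormalForm (φ * twist⁻¹) := by
  have h_inv : HasNormalForm twist⁻¹ := by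
    rw [twist_inv_eq]
    exact ((hasNormalForm_of_mem_positiveAuts twist_mem_positiveAuts).normPreserving_mul
      flipA_mem_normPreserving).mul_normPreserving flipA_mem_normPreserving
  suffices h : HasNormalForm (φ * twist⁻¹) ∧ HasNormalForm (φ * swap * twist⁻¹) from h.1
  induction hφ using positiveAuts_induction with
  | one =>
    rw [one_mul, one_mul]
    exact ⟨h_inv, h_inv.normPreserving_mul swap_mem_normPreserving⟩
  | mul_swap φ _ ih => exact ⟨ih.2, by rw [mul_assoc φ, swap_mul_swap, mul_one]; exact ih.1⟩
  | mul_twist φ hφ _ =>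
    refine ⟨by rw [mul_inv_cancel_right]; exact hasNormalForm_of_mem_positiveAuts hφ, ?_⟩
    rw [mul_assoc, mul_assoc φ, ← mul_assoc twist, twist_mul_swap_mul_twist_inv]
    refine HasNormalForm.mul_conj_mul ?_ _
    rw [← mul_assoc]
    refine (hasNormalForm_of_mem_positiveAuts ?_).mul_normPreserving flipB_mem_normPreserving
    exact mul_mem hφ (mul_mem (mul_mem swap_mem_positiveAuts twist_mem_positiveAuts)
      swap_mem_positiveAuts)

lemma hasNormalForm_mul_flips_mul_twist_inv {φ : MulAut F2} (hφ : φ ∈ positiveAuts) (s s' : Bool) :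
    HasNormalForm (φ * ((if s then 1 else flipA) * (if s' then 1 else flipB) * twist⁻¹)) := by
  have hφt := hasNormalForm_of_mem_positiveAuts (mul_mem hφ twist_mem_positiveAuts)
  cases s <;> cases s' <;>
    simp only [Bool.false_eq_true, if_true, if_false, one_mul, mul_one]
  · rw [flipA_mul_flipB_mul_twist_inv]
    refine HasNormalForm.mul_conj_mul ?_ _
    rw [← mul_assoc]
    exact (hasNormalForm_mul_twist_inv hφ).mul_normPreserving
      (mul_mem flipA_mem_normPreserving flipB_mem_normPreserving)
  · rw [flipA_mul_twist_inv, ← mul_assoc]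
    exact hφt.mul_normPreserving flipA_mem_normPreserving
  · rw [flipB_mul_twist_inv]
    refine HasNormalForm.mul_conj_mul ?_ _
    rw [← mul_assoc]
    exact hφt.mul_normPreserving flipB_mem_normPreserving
  · exact hasNormalForm_mul_twist_inv hφ

lemma HasNormalForm.mul_twist_inv {η : MulAut F2} (h : HasNormalForm η) :
    HasNormalForm (η * twist⁻¹) := by
  obtain ⟨g, σ, hσ, φ, hφ, ε, hε, rfl⟩ := h
  obtain ⟨c, s, s', rfl⟩ := exists_eq_signedPerm (by rw [hε, norm_genA]) (by rw [hε, norm_genB])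
  have hφc : φ * (if c then 1 else swap) ∈ positiveAuts := by
    refine mul_mem hφ ?_
    split_ifs
    exacts [one_mem _, swap_mem_positiveAuts]
  have := ((hasNormalForm_mul_flips_mul_twist_inv hφc s s').normPreserving_mul hσ).conj_mul g
  simpa only [signedPerm, mul_assoc] using this

/-! ### Nielsen reduction -/

/-- The total length `|η(a)| + |η(b)|` of the images of the generators. -/
def imageNorm (η : MulAut F2) : ℕ := (η genA).norm + (η genB).norm

/-- `η` has minimal total length among the automorphisms reached from it by a signed permutation,
one elementary Nielsen move and a conjugation. -/
def NielsenMinimal (η : MulAut F2) : Prop :=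
  ∀ g : F2, ∀ ε ∈ normPreserving Bool, imageNorm η ≤ imageNorm (MulAut.conj g * η * ε * twist)

lemma imageNorm_eq_letters (η : MulAut F2) (c s s' : Bool) :
    imageNorm η = (η (letter (c, s))).norm + (η (letter (!c, s'))).norm := by
  have hletter : ∀ c s, (η (letter (c, s))).norm = (η (.of c)).norm := by
    rintro c (_ | _)
    · rw [letter_false, map_inv, FreeGroup.norm_inv_eq]
    · rfl
  rw [hletter, hletter]
  cases c
  exacts [add_comm _ _, rfl]

lemma norm_map_pos {η : MulAut F2} {x : F2} (hx : x ≠ 1) : 0 < (η x).norm :=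
  Nat.pos_of_ne_zero (by simpa using hx)

lemma norm_map_letter_lt_norm_mul_self (η : MulAut F2) (l : Bool × Bool) :
    (η (letter l)).norm < (η (letter l) * η (letter l)).norm := by
  rw [← pow_two]
  exact norm_lt_norm_sq (by simpa using letter_ne_one l)

namespace NielsenMinimal

variable {η : MulAut F2}

lemma norm_add_norm_le (h : NielsenMinimal η) (g : F2) (c s s' : Bool) :
    (η (letter (c, s))).norm + (η (letter (!c, s'))).norm ≤
      (g * η (letter (c, s)) * g⁻¹).norm +
        (g * (η (letter (c, s)) * η (letter (!c, s'))) * g⁻¹).norm := by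
  have := h g _ (signedPerm_mem_normPreserving c s s')
  rw [imageNorm_eq_letters η c s s'] at this
  simpa only [imageNorm, MulAut.mul_apply, twist_genA, twist_genB, map_mul η,
    map_mul (signedPerm _ _ _), signedPerm_genA, signedPerm_genB, MulAut.conj_apply] using this

lemma norm_right_le_of_ne (h : NielsenMinimal η) (c s s' : Bool) :
    (η (letter (!c, s'))).norm ≤ (η (letter (c, s)) * η (letter (!c, s'))).norm := by
  simpa using h.norm_add_norm_le 1 c s s'

lemma norm_left_le_of_ne (h : NielsenMinimal η) (c s s' : Bool) :
    (η (letter (c, s))).norm ≤ (η (letter (c, s)) * η (letter (!c, s'))).norm := by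
  have := h.norm_right_le_of_ne (!c) (!s') (!s)
  rwa [← letter_inv, ← letter_inv, map_inv, map_inv, ← mul_inv_rev, FreeGroup.norm_inv_eq,
    FreeGroup.norm_inv_eq, Bool.not_not] at this

lemma norm_left_le (h : NielsenMinimal η) {l m : Bool × Bool} (hlm : l.1 = m.1 → l.2 = m.2) :
    (η (letter l)).norm ≤ (η (letter l) * η (letter m)).norm := by
  obtain ⟨c, s⟩ := l
  obtain ⟨c', s'⟩ := m
  rcases Bool.eq_or_eq_not c' c with rfl | rfl
  · obtain rfl : s = s' := hlm rfl
    exact (norm_map_letter_lt_norm_mul_self η _).le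
  · exact h.norm_left_le_of_ne c s s'

lemma norm_right_le (h : NielsenMinimal η) {l m : Bool × Bool} (hlm : l.1 = m.1 → l.2 = m.2) :
    (η (letter m)).norm ≤ (η (letter l) * η (letter m)).norm := by
  obtain ⟨c, s⟩ := l
  obtain ⟨c', s'⟩ := m
  rcases Bool.eq_or_eq_not c' c with rfl | rfl
  · obtain rfl : s = s' := hlm rfl
    exact (norm_map_letter_lt_norm_mul_self η _).le
  · exact h.norm_right_le_of_ne c s s'

/-- Otherwise exactly half of the middle image would cancel on either side, and a conjugated
Nielsen move would shorten the basis. -/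
lemma norm_add_norm_lt_of_ne (h : NielsenMinimal η) (c s t s' : Bool) :
    (η (letter (c, s))).norm + (η (letter (c, s'))).norm <
      (η (letter (c, s)) * η (letter (!c, t))).norm +
        (η (letter (!c, t)) * η (letter (c, s'))).norm := by
  by_contra! hcon
  have hl := h.norm_left_le_of_ne c s t
  have hr := h.norm_right_le_of_ne (!c) t s'
  have hmid := h.norm_right_le_of_ne c s t
  have hmove := fun g ↦ h.norm_add_norm_le g (!c) t s'
  simp only [Bool.not_not] at hr hmove
  have hpos : 0 < (η (letter (!c, t))).norm := norm_map_pos (letter_ne_one _)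
  rcases Bool.eq_or_eq_not s' s with rfl | rfl
  · obtain ⟨g, hy, hyx⟩ := exists_conj_norm_add_norm_le (x := η (letter (c, s')))
      (y := η (letter (!c, t))) (by lia) (by lia) (by lia)
    have := hmove g
    lia
  · have := norm_lt_max_norm_mul (x := η (letter (c, s))) (y := η (letter (!c, t)))
      (by simpa using letter_ne_one _)
    rw [← letter_inv, map_inv, FreeGroup.norm_inv_eq] at hcon hr
    lia

lemma norm_add_norm_lt (h : NielsenMinimal η) {l m k : Bool × Bool}
    (hlm : l.1 = m.1 → l.2 = m.2) (hmk : m.1 = k.1 → m.2 = k.2) :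
    (η (letter l)).norm + (η (letter k)).norm <
      (η (letter l) * η (letter m)).norm + (η (letter m) * η (letter k)).norm := by
  obtain ⟨c, s⟩ := l
  obtain ⟨c', t⟩ := m
  obtain ⟨c'', s'⟩ := k
  rcases Bool.eq_or_eq_not c' c with rfl | rfl
  · obtain rfl : s = t := hlm rfl
    exact add_lt_add_of_lt_of_le (norm_map_letter_lt_norm_mul_self η _) (h.norm_right_le hmk)
  · rcases Bool.eq_or_eq_not c'' (!c) with rfl | rfl
    · obtain rfl : t = s' := hmk rfl
      exact add_lt_add_of_le_of_lt (h.norm_left_le hlm) (norm_map_letter_lt_norm_mul_self η _)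
    · simpa only [Bool.not_not] using h.norm_add_norm_lt_of_ne c s t s'

lemma norm_map_letter_mul (h : NielsenMinimal η) {Z : List (Bool × Bool)} {l m : Bool × Bool}
    (hlm : l.1 = m.1 → l.2 = m.2) (hZ : FreeGroup.IsReduced (m :: Z)) :
    (η (letter l * .mk (m :: Z))).norm + (η (letter m)).norm =
      (η (letter l) * η (letter m)).norm + (η (.mk (m :: Z))).norm := by
  induction Z generalizing l m with
  | nil => rw [← letter, map_mul, add_comm]
  | cons k Z ih =>
    rw [FreeGroup.isReduced_cons_cons] at hZ
    have hlt := h.norm_add_norm_lt hlm hZ.1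
    have ih := ih hZ.1 hZ.2
    rw [map_mul] at ih
    rw [← letter_mul_mk m, map_mul, map_mul, ← mul_assoc]
    exact norm_mul_mul_add (by lia)

lemma length_add_norm_le (h : NielsenMinimal η) {Z : List (Bool × Bool)} {l m : Bool × Bool}
    (hlm : l.1 = m.1 → l.2 = m.2) (hZ : FreeGroup.IsReduced (m :: Z)) :
    2 * (m :: Z).length + (η (letter l)).norm + (η (letter m)).norm ≤
      2 * (η (.mk (m :: Z))).norm + (η (letter l) * η (letter m)).norm := by
  have heven := even_norm_mul_add (η (letter l)) (η (letter m))
  induction Z generalizing l m with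
  | nil =>
    have hle := h.norm_left_le hlm
    have hpos : 0 < (η (letter m)).norm := norm_map_pos (letter_ne_one m)
    rw [← letter, List.length_singleton]
    grind
  | cons k Z ih =>
    rw [FreeGroup.isReduced_cons_cons] at hZ
    have hlt := h.norm_add_norm_lt hlm hZ.1
    have hmul := h.norm_map_letter_mul hZ.1 hZ.2
    have heven' := even_norm_mul_add (η (letter m)) (η (letter k))
    have ih := ih hZ.1 hZ.2 heven'
    rw [letter_mul_mk] at hmul
    rw [List.length_cons]
    grind

lemma norm_le_norm_map (h : NielsenMinimal η) (z : F2) : z.norm ≤ (η z).norm := by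
  have hred := FreeGroup.isReduced_toWord (x := z)
  rw [FreeGroup.norm]
  nth_rewrite 2 [← FreeGroup.mk_toWord (x := z)]
  cases hz : z.toWord with
  | nil => simp
  | cons m Z =>
    have hle := h.length_add_norm_le (fun _ ↦ rfl) (hz ▸ hred) (l := m)
    have := FreeGroup.norm_mul_le (η (letter m)) (η (letter m))
    lia

lemma mem_normPreserving (h : NielsenMinimal η) : η ∈ normPreserving Bool := by
  have hinv : ∀ z : F2, z.norm = 1 → (η⁻¹ z).norm = 1 := by
    intro z hz
    have hle := h.norm_le_norm_map (η⁻¹ z)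
    have hpos : 0 < (η⁻¹ z).norm := norm_map_pos (by rintro rfl; simp at hz)
    rw [MulAut.apply_inv_self] at hle
    lia
  exact inv_mem_iff.1 (mem_normPreserving_of_norm_gen (hinv _ norm_genA) (hinv _ norm_genB))

end NielsenMinimal

lemma hasNormalForm (η : MulAut F2) : HasNormalForm η := by
  induction h : imageNorm η using Nat.strong_induction_on generalizing η with
  | _ N ih =>
    by_cases hmin : NielsenMinimal η
    · simpa using (hasNormalForm_of_mem_positiveAuts (one_mem _)).normPreserving_mul
        hmin.mem_normPreserving
    · simp only [NielsenMinimal, not_forall, not_le] at hmin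
      obtain ⟨g, ε, hε, hlt⟩ := hmin
      have := ((ih _ (h ▸ hlt) _ rfl).mul_twist_inv.mul_normPreserving (inv_mem hε)).conj_mul g⁻¹
      simpa [mul_assoc] using this

/-! ### Bounded cancellation -/

lemma toWord_letter_mul (m : Bool × Bool) (x : F2) :
    (letter m * x).toWord = match x.toWord with
      | [] => [m]
      | k :: L => if m.1 = k.1 ∧ m.2 = !k.2 then L else m :: k :: L := by
  have hred : FreeGroup.reduce x.toWord = x.toWord := FreeGroup.reduce_toWord x
  rw [← FreeGroup.mk_toWord (x := x), letter_mul_mk, FreeGroup.toWord_mk, FreeGroup.toWord_mk,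
    FreeGroup.reduce.cons, hred]
  cases x.toWord <;> rfl

lemma between_one_iff {p q : F2} :
    Between p 1 q ↔ ∀ l ∈ p.toWord.head?, l ∉ q.toWord.head? := by
  have hlcp := wdist_add_two_mul_commonPrefixLength p q
  rw [Between, wdist_comm, one_wdist, one_wdist]
  have : p.norm + q.norm = wdist p q ↔ commonPrefixLength p.toWord q.toWord = 0 := by lia
  rw [this]
  cases p.toWord <;> cases q.toWord <;> simp [commonPrefixLength, eq_comm]

/-- The first letter of `z`, read off from the reduced word of `twist z`. -/
def twistHead : List (Bool × Bool) → Option (Bool × Bool)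
  | [] => none
  | (true, true) :: (false, true) :: _ => some (false, true)
  | (true, true) :: _ => some (true, true)
  | (false, false) :: _ => some (false, false)
  | _ => some (true, false)

/-- This is a ping-pong argument: left multiplication by `twist l` maps every word outside the
domain of `l⁻¹` into the domain of `l`. -/
lemma twistHead_twist_letter_mul {c s : Bool} {x : F2}
    (hx : twistHead x.toWord ≠ some (c, !s)) :
    twistHead (twist (letter (c, s)) * x).toWord = some (c, s) := by
  have hA : twist (letter (true, true)) = letter (true, true) := twist_genA
  have hB : twist (letter (false, true)) = letter (true, true) * letter (false, true) := twist_genB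
  have hA' : twist (letter (true, false)) = letter (true, false) := by
    rw [letter_false, map_inv, ← letter_true, hA]
  have hB' : twist (letter (false, false)) = letter (false, false) * letter (true, false) := by
    rw [letter_false, map_inv, ← letter_true, hB, mul_inv_rev, letter_true, letter_true,
      ← letter_false, ← letter_false]
  rcases hw : x.toWord with _ | ⟨⟨_ | _, _ | _⟩, _ | ⟨⟨_ | _, _ | _⟩, L⟩⟩ <;>
    cases c <;> cases s <;>
    simp_all [-FreeGroup.toWord_eq_nil_iff, mul_assoc, toWord_letter_mul, twistHead]

lemma twistHead_toWord_twist (z : F2) : twistHead (twist z).toWord = z.toWord.head? := by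
  suffices h : ∀ L : List (Bool × Bool), FreeGroup.IsReduced L →
      twistHead (twist (.mk L)).toWord = L.head? by
    simpa only [FreeGroup.mk_toWord] using h z.toWord FreeGroup.isReduced_toWord
  intro L hL
  induction L with
  | nil => simp [← FreeGroup.one_eq_mk, twistHead]
  | cons l L ih =>
    rw [← letter_mul_mk, map_mul, List.head?_cons]
    refine twistHead_twist_letter_mul ?_
    rw [ih hL.tail]
    cases L with
    | nil => simp
    | cons k L =>
      rw [FreeGroup.isReduced_cons_cons] at hL
      rintro ⟨rfl, rfl⟩
      simpa using hL.1 rfl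

lemma between_one_or_between_genA {x y : F2}
    (h : ∀ l ∈ twistHead x.toWord, l ∉ twistHead y.toWord) :
    Between x 1 y ∨ Between x genA y := by
  refine or_iff_not_imp_left.2 fun hxy ↦ ?_
  suffices Between (genA⁻¹ * x) 1 (genA⁻¹ * y) by simpa using this.mul_left genA
  rw [between_one_iff] at hxy ⊢
  rw [genA, ← letter_false, toWord_letter_mul, toWord_letter_mul]
  push Not at hxy
  obtain ⟨l, hlx, hly⟩ := hxy
  obtain ⟨L, hL⟩ := List.head?_eq_some_iff.1 hlx
  obtain ⟨M, hM⟩ := List.head?_eq_some_iff.1 hly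
  rw [hL, hM] at h ⊢
  obtain rfl : l = (true, true) := by
    rcases l with ⟨_ | _, _ | _⟩ <;> simp [twistHead] at h ⊢
  rcases L with _ | ⟨⟨_ | _, _ | _⟩, L⟩ <;> rcases M with _ | ⟨⟨_ | _, _ | _⟩, M⟩ <;>
    simp [twistHead] at h ⊢

lemma Between.exists_between_twist {p v q : F2} (h : Between p v q) :
    ∃ r : F2, (r = 1 ∨ r = genA) ∧ Between (twist p) (twist v * r) (twist q) := by
  have hone : Between (v⁻¹ * p) 1 (v⁻¹ * q) := by simpa using h.mul_left v⁻¹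
  rw [between_one_iff] at hone
  simp only [← twistHead_toWord_twist] at hone
  rcases between_one_or_between_genA hone with hr | hr
  · exact ⟨1, .inl rfl, by simpa using hr.mul_left (twist v)⟩
  · exact ⟨genA, .inr rfl, by simpa using hr.mul_left (twist v)⟩

/-- `η` maps geodesics to paths which backtrack by at most `C`. -/
def BoundedCancellation (η : MulAut F2) (C : ℕ) : Prop :=
  ∀ p v q, Between p v q →
    wdist (η p) (η v) + wdist (η v) (η q) ≤ wdist (η p) (η q) + 2 * C

namespace BoundedCancellation

variable {η ε : MulAut F2} {C : ℕ}

lemma mul_normPreserving (h : BoundedCancellation η C) (hε : ε ∈ normPreserving Bool) :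
    BoundedCancellation (η * ε) C := fun p v q hpvq ↦
  h (ε p) (ε v) (ε q) (by simpa only [Between, wdist_map_of_mem_normPreserving hε] using hpvq)

lemma normPreserving_mul (h : BoundedCancellation η C) (hε : ε ∈ normPreserving Bool) :
    BoundedCancellation (ε * η) C := fun p v q hpvq ↦ by
  simpa only [MulAut.mul_apply, wdist_map_of_mem_normPreserving hε] using h p v q hpvq

lemma mul_twist (h : BoundedCancellation η C) :
    BoundedCancellation (η * twist) (C + (η genA).norm) := by
  intro p v q hpvq
  obtain ⟨r, hr, hbetween⟩ := hpvq.exists_between_twist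
  have hle := h _ _ _ hbetween
  have hnorm : (η r).norm ≤ (η genA).norm := by rcases hr with rfl | rfl <;> simp
  have hmove : wdist (η (twist v)) (η (twist v * r)) = (η r).norm := by
    rw [map_mul, wdist_self_mul]
  have hp := wdist_triangle (η (twist p)) (η (twist v * r)) (η (twist v))
  have hq := wdist_triangle (η (twist v)) (η (twist v * r)) (η (twist q))
  rw [wdist_comm (η (twist v * r)) (η (twist v))] at hp
  simp only [MulAut.mul_apply]
  lia

end BoundedCancellation

lemma map_gen_mem_positiveWords {φ : MulAut F2} (hφ : φ ∈ positiveAuts) :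
    φ genA ∈ positiveWords Bool ∧ φ genB ∈ positiveWords Bool := by
  induction hφ using positiveAuts_induction with
  | one => exact ⟨of_mem_positiveWords true, of_mem_positiveWords false⟩
  | mul_swap φ _ ih => simpa using ih.symm
  | mul_twist φ _ ih => simpa using ⟨ih.1, mul_mem ih.1 ih.2⟩

lemma boundedCancellation_of_mem_positiveAuts {φ : MulAut F2} (hφ : φ ∈ positiveAuts) :
    BoundedCancellation φ (imageNorm φ) := by
  induction hφ using positiveAuts_induction with
  | one => exact fun p v q hpvq ↦ hpvq.le.trans (Nat.le_add_right _ _)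
  | mul_swap φ _ ih =>
    convert ih.mul_normPreserving swap_mem_normPreserving using 1
    simp [imageNorm, add_comm]
  | mul_twist φ hφ ih =>
    obtain ⟨hA, hB⟩ := map_gen_mem_positiveWords hφ
    convert ih.mul_twist using 1
    simp only [imageNorm, MulAut.mul_apply, twist_genA, twist_genB, map_mul]
    rw [norm_mul_of_mem_positiveWords hA hB]
    ring

/-- `η` has cancellation bounded by its total length, and the images of the generators are
cyclically reduced. Every automorphism is of this kind up to an inner one. -/
structure Tame (η : MulAut F2) : Prop where
  norm_genA_pow : ∀ i, (η genA ^ i).norm = i * (η genA).norm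
  norm_genB_pow : ∀ i, (η genB ^ i).norm = i * (η genB).norm
  boundedCancellation : BoundedCancellation η (imageNorm η)

lemma tame_of_mem_positiveAuts {φ : MulAut F2} (hφ : φ ∈ positiveAuts) : Tame φ where
  norm_genA_pow := norm_pow_of_mem_positiveWords (map_gen_mem_positiveWords hφ).1
  norm_genB_pow := norm_pow_of_mem_positiveWords (map_gen_mem_positiveWords hφ).2
  boundedCancellation := boundedCancellation_of_mem_positiveAuts hφ

namespace Tame

variable {η ε : MulAut F2}

lemma normPreserving_mul (h : Tame η) (hε : ε ∈ normPreserving Bool) : Tame (ε * η) where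
  norm_genA_pow i := by
    rw [MulAut.mul_apply, ← map_pow, hε, hε, h.norm_genA_pow]
  norm_genB_pow i := by
    rw [MulAut.mul_apply, ← map_pow, hε, hε, h.norm_genB_pow]
  boundedCancellation := by
    have : imageNorm (ε * η) = imageNorm η := by
      rw [imageNorm, MulAut.mul_apply, MulAut.mul_apply, hε, hε, imageNorm]
    exact this ▸ h.boundedCancellation.normPreserving_mul hε

lemma norm_letter_pow (h : Tame η) (l : Bool × Bool) (i : ℕ) :
    (η (letter l) ^ i).norm = i * (η (letter l)).norm := by
  rcases l with ⟨_ | _, _ | _⟩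
  · rw [letter_false, map_inv, inv_pow, FreeGroup.norm_inv_eq, FreeGroup.norm_inv_eq]
    exact h.norm_genB_pow i
  · exact h.norm_genB_pow i
  · rw [letter_false, map_inv, inv_pow, FreeGroup.norm_inv_eq, FreeGroup.norm_inv_eq]
    exact h.norm_genA_pow i
  · exact h.norm_genA_pow i

lemma mul_normPreserving (h : Tame η) (hε : ε ∈ normPreserving Bool) : Tame (η * ε) := by
  obtain ⟨c, s, s', rfl⟩ := exists_eq_signedPerm (by rw [hε, norm_genA]) (by rw [hε, norm_genB])
  have himage : imageNorm (η * signedPerm c s s') = imageNorm η := by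
    rw [imageNorm_eq_letters η c s s', imageNorm, MulAut.mul_apply, MulAut.mul_apply,
      signedPerm_genA, signedPerm_genB]
  constructor
  · simpa only [MulAut.mul_apply, signedPerm_genA] using h.norm_letter_pow _
  · simpa only [MulAut.mul_apply, signedPerm_genB] using h.norm_letter_pow _
  · rw [himage]
    exact h.boundedCancellation.mul_normPreserving hε

end Tame

lemma exists_tame_conj_mul (η : MulAut F2) : ∃ g, Tame (MulAut.conj g * η) := by
  obtain ⟨g, σ, hσ, φ, hφ, ε, hε, rfl⟩ := hasNormalForm η
  refine ⟨g⁻¹, ?_⟩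
  rw [map_inv, inv_mul_cancel_left]
  exact ((tame_of_mem_positiveAuts hφ).normPreserving_mul hσ).mul_normPreserving hε

/-! ### The periodic word `⋯ w w w ⋯` -/

/-- The letter in position `r` of the infinite word `a b a² b² a³ b³ ⋯`, where `true` stands for
`a`. The positions `m² ≤ r < (m + 1)²` read `bᵐ aᵐ⁺¹`. -/
def infLetter (r : ℕ) : Bool := decide (r.sqrt * (r.sqrt + 1) ≤ r)

lemma infLetter_eq_true {m r : ℕ} (hle : m * (m + 1) ≤ r) (hlt : r < (m + 1) * (m + 1)) :
    infLetter r = true := by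
  have hsqrt : m = r.sqrt := Nat.eq_sqrt.2 ⟨by lia, hlt⟩
  simpa [infLetter, ← hsqrt] using hle

lemma infLetter_eq_false {m r : ℕ} (hle : m * m ≤ r) (hlt : r < m * (m + 1)) :
    infLetter r = false := by
  have hsqrt : m = r.sqrt := Nat.eq_sqrt.2 ⟨hle, by lia⟩
  simpa [infLetter, ← hsqrt] using hlt

lemma exists_of_infLetter_eq_true {r : ℕ} (hr : infLetter r = true) :
    ∃ m, m * (m + 1) ≤ r ∧ r < (m + 1) * (m + 1) :=
  ⟨r.sqrt, of_decide_eq_true hr, Nat.lt_succ_sqrt r⟩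

/-- The letter in position `p` of the word `w = a b ⋯ aⁿ bⁿ` repeated with period `n (n + 1)`. -/
def wLetter (n p : ℕ) : Bool := infLetter (p % (n * (n + 1)))

lemma wLetter_mul_add (n K p : ℕ) : wLetter n (K * (n * (n + 1)) + p) = wLetter n p := by
  rw [wLetter, wLetter, mul_comm K, Nat.mul_add_mod]

/-- The word of length `m` starting at position `k` of the periodic word `⋯ w w w ⋯`. -/
def wFactor (n k m : ℕ) : F2 :=
  FreeGroup.mk ((List.range m).map fun j ↦ (wLetter n (k + j), true))

lemma toWord_wFactor (n k m : ℕ) :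
    (wFactor n k m).toWord = (List.range m).map fun j ↦ (wLetter n (k + j), true) := by
  rw [wFactor, FreeGroup.toWord_mk]
  exact (isReduced_of_forall_snd (by simp)).reduce_eq

lemma norm_wFactor (n k m : ℕ) : (wFactor n k m).norm = m := by
  simp [FreeGroup.norm, toWord_wFactor]

lemma wFactor_add (n k l m : ℕ) :
    wFactor n k (l + m) = wFactor n k l * wFactor n (k + l) m := by
  simp [wFactor, FreeGroup.mul_mk, List.range_add, Function.comp_def, add_assoc]

lemma wFactor_eq_iff {n n' k k' m : ℕ} : wFactor n k m = wFactor n' k' m ↔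
    ∀ j < m, wLetter n (k + j) = wLetter n' (k' + j) := by
  rw [← FreeGroup.toWord_inj, toWord_wFactor, toWord_wFactor, List.map_inj_left]
  simp

lemma wFactor_mul_add (n K k m : ℕ) : wFactor n (K * (n * (n + 1)) + k) m = wFactor n k m :=
  wFactor_eq_iff.2 fun j _ ↦ by rw [add_assoc, wLetter_mul_add]

/-- The periodic word reads `c` in the `m` positions starting at `k`. -/
def Run (n k m : ℕ) (c : Bool) : Prop := ∀ j < m, wLetter n (k + j) = c

lemma letter_pow_eq_wFactor {n k m : ℕ} {l : Bool × Bool} (hm : 1 ≤ m) :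
    letter l ^ m = wFactor n k m ↔ l.2 = true ∧ Run n k m l.1 := by
  rw [← FreeGroup.toWord_inj, toWord_letter_pow, toWord_wFactor, eq_comm, List.eq_replicate_iff]
  obtain ⟨c, s⟩ := l
  simp only [List.length_map, List.length_range, List.mem_map, List.mem_range, true_and,
    forall_exists_index, and_imp, forall_apply_eq_imp_iff₂, Prod.mk.injEq]
  exact ⟨fun h ↦ ⟨(h 0 hm).2.symm, fun j hj ↦ (h j hj).1⟩, fun h j hj ↦ ⟨h.2 j hj, h.1.symm⟩⟩

lemma Run.of_pow_eq {n k m : ℕ} {c : Bool} (h : Run n k m c) :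
    FreeGroup.of c ^ m = wFactor n k m := by
  rcases Nat.eq_zero_or_pos m with rfl | hm
  · simp [wFactor, FreeGroup.one_eq_mk]
  · exact letter_pow_eq_wFactor (l := (c, true)) hm |>.2 ⟨rfl, h⟩

lemma wordW_succ (n : ℕ) : wordW (n + 1) = wordW n * (genA ^ (n + 1) * genB ^ (n + 1)) := by
  simp [wordW, List.range_succ]

lemma run_true_of_mod_eq {n p m : ℕ} (hm : m < n) (hp : p % (n * (n + 1)) = m * (m + 1)) :
    Run n p (m + 1) true := by
  intro j hj
  have hlt : m * (m + 1) + j < n * (n + 1) := by nlinarith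
  rw [wLetter, Nat.add_mod_of_add_mod_lt (by rw [hp, Nat.mod_eq_of_lt (by lia)]; exact hlt), hp,
    Nat.mod_eq_of_lt (by lia)]
  exact infLetter_eq_true (m := m) (by lia) (by lia)

lemma run_false_of_mod_eq {n p m : ℕ} (hm : m ≤ n) (hp : p % (n * (n + 1)) = m * m) :
    Run n p m false := by
  intro j hj
  have hlt : m * m + j < n * (n + 1) := by nlinarith
  rw [wLetter, Nat.add_mod_of_add_mod_lt (by rw [hp, Nat.mod_eq_of_lt (by lia)]; exact hlt), hp,
    Nat.mod_eq_of_lt (by lia)]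
  exact infLetter_eq_false (m := m) (by lia) (by lia)

lemma wordW_eq_wFactor_of_le {n m : ℕ} (hm : m ≤ n) : wordW m = wFactor n 0 (m * (m + 1)) := by
  induction m with
  | zero => simp [wordW, wFactor, FreeGroup.one_eq_mk]
  | succ m ih =>
    have ha : Run n (m * (m + 1)) (m + 1) true :=
      run_true_of_mod_eq hm (Nat.mod_eq_of_lt (by nlinarith))
    have hb : Run n ((m + 1) * (m + 1)) (m + 1) false :=
      run_false_of_mod_eq hm (Nat.mod_eq_of_lt (by nlinarith))
    rw [wordW_succ, ih (by lia), genA, genB, ha.of_pow_eq, hb.of_pow_eq,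
      show (m + 1) * (m + 1) = m * (m + 1) + (m + 1) by ring, ← wFactor_add]
    nth_rw 2 [← zero_add (m * (m + 1))]
    rw [← wFactor_add]
    congr 1
    ring

lemma wordW_pow_mul_wFactor (n K m : ℕ) :
    wordW n ^ K * wFactor n 0 m = wFactor n 0 (K * (n * (n + 1)) + m) := by
  induction K with
  | zero => simp
  | succ K ih =>
    rw [pow_succ', mul_assoc, ih, wordW_eq_wFactor_of_le le_rfl,
      ← wFactor_mul_add n 1 0 (K * (n * (n + 1)) + m), one_mul, add_zero]
    nth_rw 2 [← zero_add (n * (n + 1))]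
    rw [← wFactor_add]
    congr 1
    ring

lemma wordW_pow_eq_wFactor (n K : ℕ) : wordW n ^ K = wFactor n 0 (K * (n * (n + 1))) := by
  simpa [wFactor, ← FreeGroup.one_eq_mk] using wordW_pow_mul_wFactor n K 0

lemma norm_wordW_pow (n K : ℕ) : (wordW n ^ K).norm = K * (n * (n + 1)) := by
  rw [wordW_pow_eq_wFactor, norm_wFactor]

lemma toAdd_map_wordW (ρ : F2 →* Multiplicative ℤ) (n : ℕ) :
    2 * (ρ (wordW n)).toAdd = n * (n + 1) * ((ρ genA).toAdd + (ρ genB).toAdd) := by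
  induction n with
  | zero => simp [wordW]
  | succ n ih =>
    rw [wordW_succ]
    simp only [map_mul, map_pow, toAdd_mul, toAdd_pow, nsmul_eq_mul]
    push_cast
    linear_combination ih

/-- The element `x` is read in the periodic word `⋯ w w w ⋯` from position `k` on. -/
def OccursAt (n k : ℕ) (x : F2) : Prop := x = wFactor n k x.norm

lemma occursAt_wFactor (n k m : ℕ) : OccursAt n k (wFactor n k m) := by
  rw [OccursAt, norm_wFactor]

lemma OccursAt.of_mul {n k : ℕ} {x y : F2} (h : OccursAt n k (x * y))
    (hadd : (x * y).norm = x.norm + y.norm) : OccursAt n k x ∧ OccursAt n (k + x.norm) y := by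
  have hword := toWord_mul_of_norm_mul hadd
  rw [h, hadd, wFactor_add, toWord_mul_of_norm_mul (by simp [← wFactor_add, norm_wFactor])] at hword
  obtain ⟨hx, hy⟩ := List.append_inj hword (norm_wFactor n k x.norm)
  exact ⟨(FreeGroup.toWord_injective hx).symm, (FreeGroup.toWord_injective hy).symm⟩

lemma Between.eq_wFactor {n K : ℕ} {p : F2} (h : Between 1 p (wordW n ^ K)) :
    p = wFactor n 0 p.norm := by
  have hocc : OccursAt n 0 (p * (p⁻¹ * wordW n ^ K)) := by
    rw [mul_inv_cancel_left, wordW_pow_eq_wFactor]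
    exact occursAt_wFactor ..
  exact (hocc.of_mul (between_one_mul.1 (by rwa [mul_inv_cancel_left]))).1

lemma Run.unique {n k m m' : ℕ} (h : Run n k m false) (hend : wLetter n (k + m) = true)
    (h' : Run n k m' false) (hend' : wLetter n (k + m') = true) : m = m' := by
  rcases lt_trichotomy m m' with hlt | heq | hlt
  · exact absurd (h' m hlt) (by simp [hend])
  · exact heq
  · exact absurd (h m' hlt) (by simp [hend'])

lemma exists_add_one_mod_eq_sq {n p : ℕ} (hn : 1 ≤ n) (ha : wLetter n p = true)
    (hb : wLetter n (p + 1) = false) :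
    ∃ m, 1 ≤ m ∧ m ≤ n ∧ (p + 1) % (n * (n + 1)) = m * m := by
  have hlt := Nat.mod_lt p (show n * (n + 1) > 0 by positivity)
  obtain ⟨m, hm, hm'⟩ := exists_of_infLetter_eq_true ha
  have hmn : m < n := by
    by_contra! hnm
    have := Nat.mul_le_mul hnm (Nat.succ_le_succ hnm)
    lia
  have hmod : (p + 1) % (n * (n + 1)) = p % (n * (n + 1)) + 1 := by
    have h1 : 1 % (n * (n + 1)) = 1 := Nat.mod_eq_of_lt (by nlinarith)
    rw [Nat.add_mod_of_add_mod_lt (by nlinarith), h1]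
  refine ⟨m + 1, by lia, hmn, ?_⟩
  by_contra hne
  rw [wLetter, hmod, infLetter_eq_true (m := m) (by lia) (by lia)] at hb
  exact Bool.noConfusion hb

lemma add_mod_of_mod_eq_sq {n p m : ℕ} (hmn : m < n) (hp : p % (n * (n + 1)) = m * m) :
    (p + m) % (n * (n + 1)) = m * (m + 1) := by
  rw [Nat.add_mod, hp, Nat.mod_eq_of_lt (show m < n * (n + 1) by nlinarith),
    Nat.mod_eq_of_lt (by nlinarith)]
  ring

lemma wLetter_add_eq_true_of_mod_eq_sq {n p m : ℕ} (hn : 1 ≤ n) (hm : m ≤ n)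
    (hp : p % (n * (n + 1)) = m * m) : wLetter n (p + m) = true := by
  rcases hm.lt_or_eq with hlt | rfl
  · exact run_true_of_mod_eq hlt (add_mod_of_mod_eq_sq hlt hp) 0 (by lia)
  · have hmod : (p + m) % (m * (m + 1)) = 0 := by
      rw [Nat.add_mod, hp, Nat.mod_eq_of_lt (show m < m * (m + 1) by nlinarith),
        show m * m + m = m * (m + 1) by ring, Nat.mod_self]
    rw [wLetter, hmod]
    rfl

lemma add_one_mod_eq_sq_of_run {n p m : ℕ} (hn : 1 ≤ n) (hm : 1 ≤ m) (ha : wLetter n p = true)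
    (hb : Run n (p + 1) m false) (ha' : wLetter n (p + 1 + m) = true) :
    (p + 1) % (n * (n + 1)) = m * m := by
  obtain ⟨i, -, hin, hmod⟩ := exists_add_one_mod_eq_sq hn ha (hb 0 hm)
  rwa [hb.unique ha' (run_false_of_mod_eq hin hmod) (wLetter_add_eq_true_of_mod_eq_sq hn hin hmod)]

lemma exists_true_false_of_ne {f : ℕ → Bool} {o g : ℕ} (hper : f o = f (o + g))
    (hne : ∃ j ≤ g, f (o + j) ≠ f o) : ∃ j < g, f (o + j) = true ∧ f (o + j + 1) = false := by
  by_contra! hcon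
  have hstay : ∀ j k, j + k ≤ g → f (o + j) = true → f (o + (j + k)) = true := by
    intro j k hk hj
    induction k with
    | zero => exact hj
    | succ k ih => simpa [add_assoc] using hcon (j + k) (by lia) (ih (by lia))
  obtain ⟨j, hj, hj'⟩ := hne
  cases ho : f o with
  | true => exact hj' (by simpa [ho] using hstay 0 j (by lia) ho)
  | false =>
    have := hstay j (g - j) (by lia) (by simpa [ho] using hj')
    rw [show j + (g - j) = g by lia, ← hper, ho] at this
    exact Bool.noConfusion this

lemma run_or_dvd_of_periodic {n o g : ℕ} (hn : 1 ≤ n)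
    (hper : ∀ j < 2 * g, wLetter n (o + j) = wLetter n (o + j + g)) :
    Run n o g (wLetter n o) ∨ n * (n + 1) ∣ g := by
  by_contra! ⟨hrun, hdvd⟩
  simp only [Run, not_forall] at hrun
  obtain ⟨j, hj, hne⟩ := hrun
  obtain ⟨k, hk, ha, hb⟩ := exists_true_false_of_ne (o := o) (hper 0 (by lia)) ⟨j, hj.le, hne⟩
  have ha' : wLetter n (o + k + g) = true := (hper k (by lia)).symm.trans ha
  obtain ⟨m, hm, hmn, hmod⟩ := exists_add_one_mod_eq_sq hn ha hb
  have hrun := run_false_of_mod_eq hmn hmod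
  have hend := wLetter_add_eq_true_of_mod_eq_sq hn hmn hmod
  have hmg : m < g := by
    by_contra! hgm
    have := hrun (g - 1) (by lia)
    rw [show o + k + 1 + (g - 1) = o + k + g by lia, ha'] at this
    exact Bool.noConfusion this
  have hshift : ∀ j ≤ m, wLetter n (o + k + g + 1 + j) = wLetter n (o + k + 1 + j) := by
    intro j hj
    have := hper (k + 1 + j) (by lia)
    rw [show o + k + g + 1 + j = o + (k + 1 + j) + g by lia, ← this]
    congr 1
    lia
  have hmod' : (o + k + g + 1) % (n * (n + 1)) = m * m :=
    add_one_mod_eq_sq_of_run hn hm ha' (fun j hj ↦ (hshift j hj.le).trans (hrun j hj))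
      ((hshift m le_rfl).trans hend)
  have := (Nat.modEq_iff_dvd' (by lia)).1 (hmod.trans hmod'.symm)
  rw [show o + k + g + 1 - (o + k + 1) = g by lia] at this
  exact hdvd this

lemma not_isUnit_toAdd_map_wordW {n : ℕ} (hn : 2 ≤ n) (ρ : F2 →* Multiplicative ℤ) :
    ¬ IsUnit (ρ (wordW n)).toAdd := by
  intro hunit
  have hdvd : (n : ℤ) * (n + 1) ∣ 2 :=
    hunit.dvd_mul_right.1 ⟨_, toAdd_map_wordW ρ n⟩
  have := Int.le_of_dvd two_pos hdvd
  nlinarith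

lemma map_wFactor_mul_period {G : Type*} [CommGroup G] (ρ : F2 →* G) (n k K : ℕ) :
    ρ (wFactor n k (K * (n * (n + 1)))) = ρ (wordW n) ^ K := by
  have hcomm : wFactor n 0 k * wFactor n k (K * (n * (n + 1))) = wordW n ^ K * wFactor n 0 k := by
    rw [wordW_pow_mul_wFactor, add_comm _ k, wFactor_add, zero_add]
  apply_fun ρ at hcomm
  rw [map_mul, map_mul, map_pow, mul_comm] at hcomm
  exact mul_right_cancel hcomm

lemma OccursAt.periodic_of_pow_three {n k : ℕ} {x : F2} (h : OccursAt n k (x ^ 3))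
    (hnorm : (x ^ 3).norm = 3 * x.norm) :
    OccursAt n k x ∧
      ∀ j < 2 * x.norm, wLetter n (k + j) = wLetter n (k + j + x.norm) := by
  have hsq : (x ^ 2).norm ≤ x.norm + x.norm := by
    simpa [pow_two] using FreeGroup.norm_mul_le x x
  have hcube := FreeGroup.norm_mul_le x (x ^ 2)
  rw [← pow_succ'] at hcube
  rw [pow_succ'] at h
  obtain ⟨h₀, h₁₂⟩ := h.of_mul (by rw [← pow_succ']; lia)
  rw [pow_two] at h₁₂
  obtain ⟨h₁, h₂⟩ := h₁₂.of_mul (by rw [← pow_two]; lia)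
  refine ⟨h₀, fun j hj ↦ ?_⟩
  rcases lt_or_ge j x.norm with hlt | hge
  · rw [wFactor_eq_iff.1 (h₀.symm.trans h₁) j hlt, add_right_comm]
  · have := wFactor_eq_iff.1 (h₁.symm.trans h₂) (j - x.norm) (by lia)
    rw [show k + x.norm + (j - x.norm) = k + j by lia] at this
    rw [this]
    congr 1
    lia

lemma OccursAt.norm_eq_one_of_pow_three {n k : ℕ} {x : F2} (hn : 2 ≤ n)
    (h : OccursAt n k (x ^ 3)) (hnorm : (x ^ 3).norm = 3 * x.norm)
    {ρ : F2 →* Multiplicative ℤ} (hρ : IsUnit (ρ x).toAdd) : x.norm = 1 := by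
  obtain ⟨hx, hper⟩ := h.periodic_of_pow_three hnorm
  rcases run_or_dvd_of_periodic (by lia) hper with hrun | ⟨K, hK⟩
  · rw [hx, ← hrun.of_pow_eq, map_pow, toAdd_pow, nsmul_eq_mul] at hρ
    exact Nat.isUnit_iff.1 (Int.ofNat_isUnit.1 (isUnit_of_mul_isUnit_left hρ))
  · rw [hx, hK, mul_comm, map_wFactor_mul_period, toAdd_pow, nsmul_eq_mul] at hρ
    exact absurd (isUnit_of_mul_isUnit_right hρ) (not_isUnit_toAdd_map_wordW hn ρ)

lemma OccursAt.runs {n k p q r s : ℕ} {l m : Bool × Bool} (hp : 1 ≤ p) (hq : 1 ≤ q) (hr : 1 ≤ r)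
    (hs : 1 ≤ s) (h : OccursAt n k (letter l ^ p * (letter m ^ q * (letter l ^ r * letter m ^ s))))
    (hnorm : (letter l ^ p * (letter m ^ q * (letter l ^ r * letter m ^ s))).norm =
      p + q + r + s) :
    (l.2 = true ∧ m.2 = true) ∧ Run n k p l.1 ∧ Run n (k + p) q m.1 ∧ Run n (k + p + q) r l.1 ∧
      Run n (k + p + q + r) s m.1 := by
  have hle₁ := FreeGroup.norm_mul_le (letter l ^ p) (letter m ^ q * (letter l ^ r * letter m ^ s))
  have hle₂ := FreeGroup.norm_mul_le (letter m ^ q) (letter l ^ r * letter m ^ s)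
  have hle₃ := FreeGroup.norm_mul_le (letter l ^ r) (letter m ^ s)
  simp only [norm_letter_pow] at hle₁ hle₂ hle₃
  obtain ⟨h₁, h⟩ := h.of_mul (by simp only [norm_letter_pow]; lia)
  obtain ⟨h₂, h⟩ := h.of_mul (by simp only [norm_letter_pow]; lia)
  obtain ⟨h₃, h₄⟩ := h.of_mul (by simp only [norm_letter_pow]; lia)
  simp only [OccursAt, norm_letter_pow] at h₁ h₂ h₃ h₄
  rw [letter_pow_eq_wFactor ‹_›] at h₁ h₂ h₃ h₄
  exact ⟨⟨h₁.1, h₂.1⟩, h₁.2, h₂.2, h₃.2, h₄.2⟩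

lemma wLetter_add_two_mul_eq_true {n p m : ℕ} (hmn : m < n) (hp : p % (n * (n + 1)) = m * m) :
    wLetter n (p + 2 * m) = true := by
  rw [two_mul, ← add_assoc]
  exact run_true_of_mod_eq hmn (add_mod_of_mod_eq_sq hmn hp) m (by lia)

lemma mod_eq_sub_of_add_mod_eq {p j r ℓ : ℕ} (hℓ : 0 < ℓ) (h : (p + j) % ℓ = r) (hj : j ≤ r) :
    p % ℓ = r - j := by
  have hlt := Nat.mod_lt (p + j) hℓ
  have hdiv := Nat.div_add_mod (p + j) ℓ
  rw [show p = ℓ * ((p + j) / ℓ) + (r - j) by lia, Nat.mul_add_mod, Nat.mod_eq_of_lt (by lia)]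

lemma mod_eq_of_runs {n o i : ℕ} {c c' : Bool} (hi : 1 ≤ i) (hin : i < n) (hne : c ≠ c')
    (h₁ : Run n o 1 c) (h₂ : Run n (o + 1) i c') (h₃ : Run n (o + 1 + i) i c)
    (h₄ : Run n (o + 1 + i + i) (i + 1) c') :
    c = false ∧ c' = true ∧ (o + 1) % (n * (n + 1)) = i * i - i := by
  cases c with
  | false =>
    obtain rfl : c' = true := by simpa using hne.symm
    have hlast : wLetter n (o + i) = true := by
      have := h₂ (i - 1) (by lia)
      rwa [show o + 1 + (i - 1) = o + i by lia] at this
    rw [add_right_comm o] at h₃ h₄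
    have hmod := add_one_mod_eq_sq_of_run (by lia) hi hlast h₃ (h₄ 0 (by lia))
    rw [add_right_comm o] at hmod
    exact ⟨rfl, rfl, mod_eq_sub_of_add_mod_eq (by nlinarith) hmod (by nlinarith)⟩
  | true =>
    obtain rfl : c' = false := by simpa using hne.symm
    have hmod := add_one_mod_eq_sq_of_run (by lia) hi (h₁ 0 (by lia)) h₂ (h₃ 0 (by lia))
    have := wLetter_add_two_mul_eq_true hin hmod
    rw [two_mul, ← add_assoc] at this
    exact absurd (h₄ 0 (by lia)) (by simp [this])

lemma not_runs_reverse {n o i : ℕ} {c c' : Bool} (hi : 3 ≤ i) (hin : i < n) (hne : c ≠ c')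
    (h₁ : Run n o (i + 1) c) (h₂ : Run n (o + (i + 1)) i c') (h₃ : Run n (o + (i + 1) + i) i c)
    (h₄ : Run n (o + (i + 1) + i + i) 1 c') : False := by
  cases c with
  | false =>
    obtain rfl : c' = true := by simpa using hne.symm
    have hlast : wLetter n (o + i + i) = true := by
      have := h₂ (i - 1) (by lia)
      rwa [show o + (i + 1) + (i - 1) = o + i + i by lia] at this
    rw [show o + (i + 1) + i = o + i + i + 1 by lia] at h₃ h₄
    have hmod := add_one_mod_eq_sq_of_run (by lia) (by lia) hlast h₃ (h₄ 0 (by lia))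
    obtain ⟨k, rfl⟩ : ∃ k, i = k + 2 := ⟨i - 2, by lia⟩
    have hmod' : o % (n * (n + 1)) = (k + 2) * (k + 2) - (2 * (k + 2) + 1) :=
      mod_eq_sub_of_add_mod_eq (by nlinarith) (by rw [← hmod]; congr 1; lia) (by nlinarith)
    have ha : wLetter n o = true := by
      rw [wLetter, hmod']
      exact infLetter_eq_true (m := k) (by ring_nf; lia) (by ring_nf; lia)
    exact absurd (h₁ 0 (by lia)) (by simp [ha])
  | true =>
    obtain rfl : c' = false := by simpa using hne.symm
    have hmod := add_one_mod_eq_sq_of_run (by lia) (by lia) (h₁ i (by lia)) h₂ (h₃ 0 (by lia))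
    have := wLetter_add_two_mul_eq_true hin hmod
    rw [two_mul, ← add_assoc, add_assoc o] at this
    exact absurd (h₄ 0 (by lia)) (by simp [this])

/-! ### Axes -/

section Axis

variable {α : Type*} [DecidableEq α] {e e' p q v v' w z κ : FreeGroup α} {C : ℕ}

lemma Between.or_between (h : Between p v q) (r : FreeGroup α) : Between p v r ∨ Between r v q := by
  have h4 := wdist_add_wdist_le p q v r
  have hp := wdist_triangle p v r
  have hq := wdist_triangle r v q
  rw [wdist_comm q r, wdist_comm q v] at h4
  have := wdist_comm v r
  unfold Between at *
  lia

lemma Between.of_wdist_le (h : Between e v q) (hle : wdist e p ≤ wdist e v) : Between p v q := by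
  rcases h.or_between p with h' | h'
  · unfold Between at h'
    obtain rfl : v = p := wdist_eq_zero.1 (by lia)
    rw [Between, wdist_self, zero_add]
  · exact h'

lemma Between.wdist_le_of_wdist_add_le (he : Between p v e) (he' : Between p v e')
    (hp : wdist e p + wdist p e' ≤ wdist e e' + 2 * C) : wdist p v ≤ C := by
  have htri := wdist_triangle e v e'
  have := wdist_comm e p
  have := wdist_comm e v
  unfold Between at he he'
  lia

lemma Between.of_wdist_add_le (h : Between p v q)
    (hp : wdist e p + wdist p e' ≤ wdist e e' + 2 * C)
    (hq : wdist e q + wdist q e' ≤ wdist e e' + 2 * C)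
    (hpv : C < wdist p v) (hvq : C < wdist v q) : Between e v e' := by
  have hnotp (he : Between p v e) : ¬Between p v e' := fun he' ↦
    (he.wdist_le_of_wdist_add_le he' hp).not_gt hpv
  rcases h.or_between e with he | he
  · exact ((he.or_between e').resolve_left (hnotp he)).symm
  rcases h.or_between e' with he' | he'
  · exact (he'.or_between e).resolve_left fun hpe ↦ hnotp hpe he'
  · have := he.symm.wdist_le_of_wdist_add_le he'.symm hq
    rw [wdist_comm] at this
    lia

/-- `v` lies on the segment from `z⁻ᴺ` to `zᴺ` for every `N ≥ 1`. Such points lie on the axis of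
`z`, the line on which `z` acts as a translation. -/
def OnAxis (z v : FreeGroup α) : Prop := ∀ N : ℕ, 1 ≤ N → Between (z ^ N)⁻¹ v (z ^ N)

/-- `p` is within distance `C` of the segment from `z⁻ᴺ` to `zᴺ` for every `N ≥ 1`. -/
def NearAxis (z : FreeGroup α) (C : ℕ) (p : FreeGroup α) : Prop := ∀ N : ℕ, 1 ≤ N →
  wdist (z ^ N)⁻¹ p + wdist p (z ^ N) ≤ wdist (z ^ N)⁻¹ (z ^ N) + 2 * C

lemma OnAxis.inv (h : OnAxis z v) : OnAxis z⁻¹ v := fun N hN ↦ by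
  simpa using (h N hN).symm

lemma OnAxis.map {ε : MulAut (FreeGroup α)} (h : OnAxis z v) (hε : ε ∈ normPreserving α) :
    OnAxis (ε z) (ε v) := fun N hN ↦ by
  simpa only [Between, ← map_pow, ← map_inv, wdist_map_of_mem_normPreserving hε] using h N hN

lemma NearAxis.onAxis_of_between (hp : NearAxis z C p) (hq : NearAxis z C q) (h : Between p v q)
    (hpv : C < wdist p v) (hvq : C < wdist v q) : OnAxis z v := fun N hN ↦
  h.of_wdist_add_le (hp N hN) (hq N hN) hpv hvq

lemma OnAxis.between_one_pow {N : ℕ} (h : OnAxis (κ * w * κ⁻¹) v) (hN : 1 ≤ N)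
    (hlarge : 3 * κ.norm + v.norm ≤ (w ^ N).norm) :
    Between 1 (w ^ N * κ⁻¹ * v) (w ^ (2 * N)) := by
  have hb := h N hN
  rw [conj_pow] at hb
  set y := κ * w ^ N * κ⁻¹ with hy
  have hstart : wdist y⁻¹ (κ * (w ^ N)⁻¹) = κ.norm := by simp [wdist, hy]
  have hend : wdist y (κ * w ^ N) = κ.norm := by simp [wdist, hy, mul_assoc]
  have hynorm : (w ^ N).norm ≤ y.norm + 2 * κ.norm := by
    have h₁ := FreeGroup.norm_mul_le (κ⁻¹ * y) κ
    have h₂ := FreeGroup.norm_mul_le κ⁻¹ y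
    rw [show κ⁻¹ * y * κ = w ^ N by rw [hy]; group] at h₁
    rw [FreeGroup.norm_inv_eq] at h₂
    lia
  have hfar (x : FreeGroup α) (hx : x.norm = y.norm) : κ.norm ≤ wdist x v := by
    have := wdist_triangle 1 v x
    rw [one_wdist, one_wdist, wdist_comm] at this
    lia
  have h₁ := hb.of_wdist_le (hstart.trans_le (hfar _ FreeGroup.norm_inv_eq))
  have h₂ := (h₁.symm.of_wdist_le (hend.trans_le (hfar _ rfl))).symm
  convert h₂.mul_left (w ^ N * κ⁻¹) using 1
  · group
  · rw [two_mul, pow_add]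
    group

end Axis

lemma OnAxis.nearAxis_map {η : MulAut F2} {C : ℕ} {z v : F2} (h : OnAxis z v)
    (hη : BoundedCancellation η C) : NearAxis (η z) C (η v) := fun N hN ↦ by
  simpa only [map_inv, map_pow] using hη _ _ _ (h N hN)

lemma OnAxis.exists_occursAt {n : ℕ} {κ v v' : F2} (hn : 1 ≤ n)
    (h : OnAxis (κ * wordW n * κ⁻¹) v) (h' : OnAxis (κ * wordW n * κ⁻¹) v') :
    ∃ N k, (wordW n ^ N * κ⁻¹ * v = wFactor n 0 k ∧ OccursAt n k (v⁻¹ * v')) ∨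
      OccursAt n k (v⁻¹ * v')⁻¹ := by
  set N := 3 * κ.norm + v.norm + v'.norm + 1
  have hnorm : N ≤ (wordW n ^ N).norm := by
    rw [norm_wordW_pow]
    exact Nat.le_mul_of_pos_right _ (by positivity)
  have hv := (h.between_one_pow (N := N) (by lia) (by lia)).eq_wFactor
  have hv' := (h'.between_one_pow (N := N) (by lia) (by lia)).eq_wFactor
  generalize (wordW n ^ N * κ⁻¹ * v).norm = k at hv
  generalize (wordW n ^ N * κ⁻¹ * v').norm = k' at hv'
  have hquot : v⁻¹ * v' = (wFactor n 0 k)⁻¹ * wFactor n 0 k' := by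
    rw [← hv, ← hv']
    group
  rcases le_total k k' with hle | hle <;> obtain ⟨m, rfl⟩ := Nat.exists_eq_add_of_le hle
  · refine ⟨N, k, .inl ⟨hv, ?_⟩⟩
    rw [hquot, wFactor_add, inv_mul_cancel_left, zero_add]
    exact occursAt_wFactor ..
  · refine ⟨N, k', .inr ?_⟩
    rw [hquot, mul_inv_rev, inv_inv, wFactor_add, inv_mul_cancel_left, zero_add]
    exact occursAt_wFactor ..

lemma norm_eq_one_of_nearAxis {n C : ℕ} {κ p x : F2} (hn : 2 ≤ n)
    (hp : NearAxis (κ * wordW n * κ⁻¹) C p) (hq : NearAxis (κ * wordW n * κ⁻¹) C (p * x ^ 9))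
    (hx : ∀ i, (x ^ i).norm = i * x.norm) (hC : C < 3 * x.norm) {ρ : F2 →* Multiplicative ℤ}
    (hρ : IsUnit (ρ x).toAdd) : x.norm = 1 := by
  have honAxis (i : ℕ) (h3 : 3 ≤ i) (h6 : i ≤ 6) : OnAxis (κ * wordW n * κ⁻¹) (p * x ^ i) := by
    have hpi : wdist p (p * x ^ i) = i * x.norm := by rw [wdist_self_mul, hx]
    have hiq : wdist (p * x ^ i) (p * x ^ 9) = (9 - i) * x.norm := by
      rw [show x ^ 9 = x ^ i * x ^ (9 - i) by rw [← pow_add]; congr 1; lia, ← mul_assoc,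
        wdist_self_mul, hx]
    refine hp.onAxis_of_between hq ?_ (by nlinarith) ?_
    · rw [Between, hpi, hiq, wdist_self_mul, hx, ← add_mul]
      congr 1
      lia
    · rw [hiq]
      exact hC.trans_le (Nat.mul_le_mul_right _ (by lia))
  have hquot : (p * x ^ 3)⁻¹ * (p * x ^ 6) = x ^ 3 := by group
  obtain ⟨N, k, ⟨-, h⟩ | h⟩ :=
    (honAxis 3 (by lia) (by lia)).exists_occursAt (by lia) (honAxis 6 (by lia) (by lia))
  · rw [hquot] at h
    exact h.norm_eq_one_of_pow_three hn (hx 3) hρ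
  · rw [hquot, ← inv_pow] at h
    rw [← FreeGroup.norm_inv_eq]
    refine h.norm_eq_one_of_pow_three hn ?_ (ρ := ρ) (by simpa using hρ)
    rw [inv_pow, FreeGroup.norm_inv_eq, FreeGroup.norm_inv_eq, hx]

/-! ### The pattern -/

lemma OnAxis.of_between {α : Type*} [DecidableEq α] {z v v' u : FreeGroup α} (hv : OnAxis z v)
    (hv' : OnAxis z v') (h : Between v u v') : OnAxis z u := by
  rcases Nat.eq_zero_or_pos (wdist v u) with hu | hu
  · rwa [← wdist_eq_zero.1 hu]
  rcases Nat.eq_zero_or_pos (wdist u v') with hu' | hu'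
  · rwa [wdist_eq_zero.1 hu']
  exact NearAxis.onAxis_of_between (fun N hN ↦ (hv N hN).le) (fun N hN ↦ (hv' N hN).le) h hu hu'

lemma OnAxis.of_mul {α : Type*} [DecidableEq α] {z v x y : FreeGroup α} (hv : OnAxis z v)
    (hv' : OnAxis z (v * (x * y))) (hx : x ∈ positiveWords α) (hy : y ∈ positiveWords α) :
    OnAxis z (v * x) := by
  refine hv.of_between hv' ?_
  have h := (between_one_mul.2 (norm_mul_of_mem_positiveWords hx hy)).mul_left v
  rwa [mul_one] at h

/-- The word `b aⁱ bⁱ aⁱ⁺¹`, whose occurrences in the periodic word `⋯ w w w ⋯` are unique up to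
translation by the period. -/
def pattern (i : ℕ) : F2 := genB ^ 1 * (genA ^ i * (genB ^ i * genA ^ (i + 1)))

lemma norm_pattern (i : ℕ) : (pattern i).norm = 1 + i + i + (i + 1) := by
  have hA (j : ℕ) : genA ^ j ∈ positiveWords Bool := pow_mem genA_mem_positiveWords j
  have hB (j : ℕ) : genB ^ j ∈ positiveWords Bool := pow_mem genB_mem_positiveWords j
  rw [pattern, norm_mul_of_mem_positiveWords (hB _) (mul_mem (hA _) (mul_mem (hB _) (hA _))),
    norm_mul_of_mem_positiveWords (hA _) (mul_mem (hB _) (hA _)),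
    norm_mul_of_mem_positiveWords (hB _) (hA _)]
  simp only [norm_pow_of_mem_positiveWords genA_mem_positiveWords,
    norm_pow_of_mem_positiveWords genB_mem_positiveWords, norm_genA, norm_genB]
  ring

lemma Tame.norm_map_of_eq_one {n : ℕ} {ψ : MulAut F2} {κ z p : F2} (hn : 2 ≤ n) (hψ : Tame ψ)
    (hz : ψ z = κ * wordW n * κ⁻¹) {c : Bool} (hp : OnAxis z p)
    (hq : OnAxis z (p * FreeGroup.of c ^ 9))
    (hlong : imageNorm ψ < 3 * (ψ (FreeGroup.of c)).norm) : (ψ (FreeGroup.of c)).norm = 1 := by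
  let exponentSum : F2 →* Multiplicative ℤ := FreeGroup.lift fun _ ↦ .ofAdd 1
  have hp' := hp.nearAxis_map hψ.boundedCancellation
  have hq' := hq.nearAxis_map hψ.boundedCancellation
  rw [hz] at hp' hq'
  rw [map_mul, map_pow] at hq'
  exact norm_eq_one_of_nearAxis hn hp' hq' (hψ.norm_letter_pow (c, true)) hlong
    (ρ := exponentSum.comp (ψ⁻¹ : MulAut F2).toMonoidHom) (by simp [exponentSum])

lemma Tame.mem_normPreserving_of_onAxis {n i : ℕ} {ψ : MulAut F2} {κ z v : F2} (hn : 2 ≤ n)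
    (hi : 9 ≤ i) (hψ : Tame ψ) (hz : ψ z = κ * wordW n * κ⁻¹) (hv : OnAxis z v)
    (hv' : OnAxis z (v * pattern i)) : ψ ∈ normPreserving Bool := by
  have hA (j : ℕ) : genA ^ j ∈ positiveWords Bool := pow_mem genA_mem_positiveWords j
  have hB (j : ℕ) : genB ^ j ∈ positiveWords Bool := pow_mem genB_mem_positiveWords j
  have hi9 (x : F2) : x ^ i = x ^ 9 * x ^ (i - 9) := by rw [← pow_add, Nat.add_sub_cancel' hi]
  have hposA : 0 < (ψ genA).norm := norm_map_pos genA_ne_one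
  have hposB : 0 < (ψ genB).norm := norm_map_pos genB_ne_one
  have hb : OnAxis z (v * genB ^ 1) :=
    hv.of_mul hv' (hB 1) (mul_mem (hA _) (mul_mem (hB _) (hA _)))
  rw [pattern, ← mul_assoc v] at hv'
  suffices (ψ genA).norm = 1 ∧ (ψ genB).norm = 1 from mem_normPreserving_of_norm_gen this.1 this.2
  rcases le_total (ψ genB).norm (ψ genA).norm with hle | hle
  · have ha : OnAxis z (v * genB ^ 1 * genA ^ 9) := by
      rw [hi9 genA, mul_assoc (genA ^ 9)] at hv'
      exact hb.of_mul hv' (hA _) (mul_mem (hA _) (mul_mem (hB _) (hA _)))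
    have := hψ.norm_map_of_eq_one (c := true) hn hz hb ha (by unfold imageNorm genA at *; lia)
    exact ⟨this, by unfold genA genB at *; lia⟩
  · have ha := hb.of_mul hv' (hA _) (mul_mem (hB _) (hA _))
    rw [← mul_assoc (v * _), hi9 genB, mul_assoc (genB ^ 9)] at hv'
    have hb' := ha.of_mul hv' (hB _) (mul_mem (hB _) (hA _))
    have := hψ.norm_map_of_eq_one (c := false) hn hz ha hb' (by unfold imageNorm genB at *; lia)
    exact ⟨by unfold genA genB at *; lia, this⟩

lemma map_pattern_signedPerm (c s s' : Bool) (i : ℕ) :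
    signedPerm c s s' (pattern i) = letter (!c, s') ^ 1 *
      (letter (c, s) ^ i * (letter (!c, s') ^ i * letter (c, s) ^ (i + 1))) := by
  simp only [pattern, map_mul, map_pow, signedPerm_genA, signedPerm_genB]

lemma eq_one_of_occursAt_map_pattern {n i k : ℕ} {ψ : MulAut F2} (hi : 1 ≤ i) (hin : i < n)
    (hψ : ψ ∈ normPreserving Bool) (h : OccursAt n k (ψ (pattern i))) :
    ψ = 1 ∧ (k + 1) % (n * (n + 1)) = i * i - i := by
  have hnorm := (hψ (pattern i)).trans (norm_pattern i)
  obtain ⟨c, s, s', rfl⟩ := exists_eq_signedPerm ((hψ _).trans norm_genA) ((hψ _).trans norm_genB)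
  rw [map_pattern_signedPerm] at h hnorm
  obtain ⟨⟨hs', hs⟩, h₁, h₂, h₃, h₄⟩ := h.runs le_rfl hi hi (by lia) hnorm
  obtain ⟨-, hc, hk⟩ := mod_eq_of_runs hi hin (by simp) h₁ h₂ h₃ h₄
  dsimp only at hs hs' hc
  subst hs hs' hc
  exact ⟨aut_ext_gen (signedPerm_genA ..) (signedPerm_genB ..), hk⟩

lemma not_occursAt_inv_map_pattern {n i k : ℕ} {ψ : MulAut F2} (hi : 3 ≤ i) (hin : i < n)
    (hψ : ψ ∈ normPreserving Bool) : ¬OccursAt n k (ψ (pattern i))⁻¹ := by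
  intro h
  have hnorm := (hψ (pattern i)).trans (norm_pattern i)
  obtain ⟨c, s, s', rfl⟩ := exists_eq_signedPerm ((hψ _).trans norm_genA) ((hψ _).trans norm_genB)
  have hinv : (signedPerm c s s' (pattern i))⁻¹ = letter (c, !s) ^ (i + 1) *
      (letter (!c, !s') ^ i * (letter (c, !s) ^ i * letter (!c, !s') ^ 1)) := by
    simp only [map_pattern_signedPerm, ← letter_inv, inv_pow, mul_inv_rev, mul_assoc]
  rw [← FreeGroup.norm_inv_eq, hinv] at hnorm
  rw [hinv] at h
  obtain ⟨-, h₁, h₂, h₃, h₄⟩ := h.runs (by lia) (by lia) (by lia) le_rfl (by lia)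
  exact not_runs_reverse hi hin (by simp) h₁ h₂ h₃ h₄

lemma exists_eq_conj_wordW_of_onAxis {n i : ℕ} {ψ : MulAut F2} {κ z v : F2} (hi : 9 ≤ i)
    (hin : i < n) (hψ : Tame ψ) (hz : ψ z = κ * wordW n * κ⁻¹) (hv : OnAxis z v)
    (hv' : OnAxis z (v * pattern i)) :
    ∃ g k, z = g * wordW n * g⁻¹ ∧ v = g * wFactor n 0 k ∧
      (k + 1) % (n * (n + 1)) = i * i - i := by
  have hmem := hψ.mem_normPreserving_of_onAxis (by lia) hi hz hv hv'
  have hψv := hv.map hmem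
  have hψv' := hv'.map hmem
  rw [hz] at hψv hψv'
  have hquot : (ψ v)⁻¹ * ψ (v * pattern i) = ψ (pattern i) := by rw [map_mul, inv_mul_cancel_left]
  obtain ⟨N, k, ⟨hk, h⟩ | h⟩ := hψv.exists_occursAt (by lia) hψv' <;> rw [hquot] at h
  · obtain ⟨rfl, hmod⟩ := eq_one_of_occursAt_map_pattern (by lia) hin hmem h
    refine ⟨κ * (wordW n ^ N)⁻¹, k, ?_, ?_, hmod⟩
    · rw [MulAut.one_apply] at hz
      rw [hz]
      group
    · rw [← hk, MulAut.one_apply]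
      group
  · exact absurd h (not_occursAt_inv_map_pattern (by lia) hin hmem)

lemma conj_wordW_eq_of_mul_wFactor_eq {n k k' : ℕ} {g g' : F2}
    (h : g * wFactor n 0 k = g' * wFactor n 0 k') (hk : k ≡ k' [MOD n * (n + 1)]) :
    g * wordW n * g⁻¹ = g' * wordW n * g'⁻¹ := by
  wlog hle : k ≤ k' generalizing k k' g g'
  · exact (this h.symm hk.symm (le_of_not_ge hle)).symm
  obtain ⟨q, hq⟩ := (Nat.modEq_iff_dvd' hle).1 hk
  rw [show k' = q * (n * (n + 1)) + k by lia, ← wordW_pow_mul_wFactor, ← mul_assoc,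
    mul_left_inj] at h
  rw [h]
  group

/-! ### Length estimates -/

lemma BoundedCancellation.norm_add_norm_le {η : MulAut F2} {C : ℕ} {p q : F2}
    (h : BoundedCancellation η C) (hpq : (p * q).norm = p.norm + q.norm) :
    (η p).norm + (η q).norm ≤ (η (p * q)).norm + 2 * C := by
  simpa only [map_one, map_mul, one_wdist, wdist_self_mul] using h _ _ _ (between_one_mul.2 hpq)

lemma wordW_mem_positiveWords (n : ℕ) : wordW n ∈ positiveWords Bool := by
  refine list_prod_mem fun x hx ↦ ?_
  obtain ⟨i, -, rfl⟩ := List.mem_map.1 hx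
  exact mul_mem (pow_mem genA_mem_positiveWords _) (pow_mem genB_mem_positiveWords _)

lemma Tame.mul_imageNorm_le_norm_wordW {η : MulAut F2} (h : Tame η) (m : ℕ) :
    m * (m + 1) * imageNorm η ≤ 2 * (η (wordW m)).norm + 8 * m * imageNorm η := by
  induction m with
  | zero => simp
  | succ m ih =>
    have hA := pow_mem genA_mem_positiveWords (m + 1)
    have hB := pow_mem genB_mem_positiveWords (m + 1)
    have hAB := h.boundedCancellation.norm_add_norm_le (norm_mul_of_mem_positiveWords hA hB)
    have hw := h.boundedCancellation.norm_add_norm_le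
      (norm_mul_of_mem_positiveWords (wordW_mem_positiveWords m) (mul_mem hA hB))
    rw [map_pow, map_pow, h.norm_genA_pow, h.norm_genB_pow, ← mul_add, ← imageNorm] at hAB
    rw [← wordW_succ] at hw
    linarith

lemma Tame.mul_imageNorm_le_translationLength {η : MulAut F2} (h : Tame η) (n : ℕ) :
    n * (n + 1) * imageNorm η ≤
      2 * translationLength (η (wordW n)) + (8 * n + 4) * imageNorm η := by
  have hw := wordW_mem_positiveWords n
  have hsq := h.boundedCancellation.norm_add_norm_le (norm_mul_of_mem_positiveWords hw hw)
  rw [map_mul, ← pow_two, norm_pow_succ _ 1, one_mul] at hsq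
  linarith [h.mul_imageNorm_le_norm_wordW n]

/-! ### The common window -/

section Window

variable {α : Type*} [DecidableEq α] {e e' f o u p x : FreeGroup α} {C : ℕ}

/-- The axis of `x` runs, in the direction in which `x` translates it, through `1` and then
through `u`. -/
def AxisPrefix (u x : FreeGroup α) : Prop :=
  ∀ M : ℕ, 1 ≤ M → Between (x ^ M)⁻¹ 1 u ∧ Between 1 u (x ^ M)

lemma Between.between_of_ne (heo : Between e o u) (hue : Between o u e') (hne : o ≠ u) :
    Between e o e' := by
  refine (heo.or_between e').resolve_right fun h ↦ hne (wdist_eq_zero.1 ?_)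
  have := wdist_comm e' o
  have := wdist_comm e' u
  unfold Between at h hue
  lia

lemma wdist_add_wdist_le_of_near (heo : Between e o u) (hue : Between o u e')
    (hp : wdist e p + wdist p e' ≤ wdist e e' + 2 * C) (hlt : wdist p u < wdist o p + wdist o u)
    (hlt' : wdist o p < wdist p u + wdist o u) : wdist o p + wdist p u ≤ wdist o u + 2 * C := by
  have hpo : Between e o p := (heo.or_between p).resolve_right fun h ↦ by
    rw [Between, wdist_comm p o] at h
    lia
  have hpu : Between p u e' := (hue.or_between p).resolve_left fun h ↦ by
    rw [Between, wdist_comm u p] at h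
    lia
  have hoe := heo.between_of_ne hue (by rintro rfl; simp only [wdist_self] at *; lia)
  unfold Between at *
  lia

lemma wdist_add_lt_of_between (he : Between e o u) (hf : Between f o u)
    (hp : wdist p u + C < wdist o u) : wdist e f + 2 * C < wdist e p + wdist p f := by
  have h₁ := wdist_triangle e p u
  have h₂ := wdist_triangle f p u
  have h₃ := wdist_triangle e o f
  have := wdist_comm f p
  have := wdist_comm f o
  unfold Between at he hf
  lia

lemma exists_not_and_succ {P : ℕ → Prop} {a b : ℕ} (hab : a ≤ b) (ha : ¬P a) (hb : P b) :
    ∃ k, a ≤ k ∧ k < b ∧ ¬P k ∧ P (k + 1) := by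
  by_contra! hstep
  have hnot : ∀ k, a ≤ k → k ≤ b → ¬P k := by
    intro k hak
    induction k, hak using Nat.le_induction with
    | base => exact fun _ ↦ ha
    | succ k hak ih => exact fun hkb ↦ hstep k hak hkb (ih (by lia))
  exact hnot b hab le_rfl hb

-- The point `k₀` is where the path passes the midpoint of `1` and `u`.
lemma exists_forall_near_midpoint {c : ℕ → FreeGroup α} {a b R : ℕ} (hab : a ≤ b)
    (hc : ∀ k m, wdist (c k) (c (k + m)) ≤ m * C) (hu : u ≠ 1) (ha : Between (c a) 1 u)
    (hb : Between 1 u (c b)) :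
    ∃ k₀, a ≤ k₀ ∧ k₀ < b ∧ ∀ k, k₀ ≤ k + R → k ≤ k₀ + R →
      (c k).norm ≤ wdist (c k) u + 2 * ((R + 1) * C) ∧
      wdist (c k) u ≤ (c k).norm + 2 * ((R + 1) * C) := by
  have hu' : 0 < u.norm := Nat.pos_of_ne_zero (by simpa using hu)
  obtain ⟨k₀, hak, hkb, hnot, hlt⟩ :=
    exists_not_and_succ (P := fun k ↦ wdist (c k) u < (c k).norm) hab
    (by rw [Between, wdist_comm _ 1, one_wdist, one_wdist] at ha; lia)
    (by rw [Between, wdist_comm u, one_wdist, one_wdist] at hb; lia)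
  have hstep (k m : ℕ) (hm : m ≤ R + 1) : wdist (c k) (c (k + m)) ≤ (R + 1) * C :=
    (hc k m).trans (Nat.mul_le_mul_right C hm)
  have hclose (k l : ℕ) (hd : wdist (c k) (c l) ≤ (R + 1) * C) :
      (c k).norm + wdist (c l) u ≤ (c l).norm + wdist (c k) u + 2 * ((R + 1) * C) := by
    have h₁ := wdist_triangle 1 (c l) (c k)
    have h₂ := wdist_triangle (c l) (c k) u
    rw [wdist_comm (c l) (c k)] at h₁ h₂
    rw [one_wdist, one_wdist] at h₁
    lia
  refine ⟨k₀, hak, hkb, fun k hk hk' ↦ ?_⟩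
  rcases le_or_gt k k₀ with hle | hgt
  · have h₁ := hstep k (k₀ - k) (by lia)
    have h₂ := hstep k (k₀ + 1 - k) (by lia)
    rw [Nat.add_sub_cancel' (by lia)] at h₁ h₂
    have := hclose k k₀ h₁
    have := hclose (k₀ + 1) k (by rwa [wdist_comm])
    lia
  · have h₁ := hstep k₀ (k - k₀) (by lia)
    have h₂ := hstep (k₀ + 1) (k - (k₀ + 1)) (by lia)
    rw [Nat.add_sub_cancel' (by lia)] at h₁ h₂
    have := hclose k k₀ (by rwa [wdist_comm])
    have := hclose (k₀ + 1) k h₂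
    lia

end Window

lemma BoundedCancellation.between_of_between {η : MulAut F2} {C : ℕ} {e e' f f' u v : F2}
    (hη : BoundedCancellation η C) (he : Between (η e) 1 u) (he' : Between 1 u (η e'))
    (hf : Between (η f) 1 u) (hf' : Between 1 u (η f')) (hvu : wdist (η v) u + C < u.norm)
    (hv : (η v).norm + C < u.norm) (h : Between e v e') : Between f v f' := by
  have hef : ¬Between e v f := fun hb ↦
    (hη _ _ _ hb).not_gt (wdist_add_lt_of_between he hf (by rwa [one_wdist]))
  have hef' : ¬Between f' v e' := fun hb ↦ (hη _ _ _ hb).not_gt <|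
    wdist_add_lt_of_between hf'.symm he'.symm (by rwa [wdist_comm _ 1, wdist_comm u, one_wdist,
      one_wdist])
  exact (((h.or_between f).resolve_left hef).or_between f').resolve_right hef'

/-- The points of the axis of `g w g⁻¹`, indexed by their position relative to `g w⁻ᴹ`. -/
def axisPoint (n : ℕ) (g : F2) (M k : ℕ) : F2 := g * (wordW n ^ M)⁻¹ * wFactor n 0 k

lemma axisPoint_add (n : ℕ) (g : F2) (M k m : ℕ) :
    axisPoint n g M (k + m) = axisPoint n g M k * wFactor n k m := by
  rw [axisPoint, wFactor_add, zero_add, ← mul_assoc, ← axisPoint]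

lemma axisPoint_zero (n : ℕ) (g : F2) (M : ℕ) :
    axisPoint n g M 0 = ((g * wordW n * g⁻¹) ^ M)⁻¹ * g := by
  have h₀ : wFactor n 0 0 = 1 := by simpa using (wordW_pow_eq_wFactor n 0).symm
  rw [axisPoint, conj_pow, h₀]
  group

lemma axisPoint_two_mul (n : ℕ) (g : F2) (M : ℕ) :
    axisPoint n g M (2 * M * (n * (n + 1))) = (g * wordW n * g⁻¹) ^ M * g := by
  rw [axisPoint, conj_pow, ← wordW_pow_eq_wFactor, two_mul, pow_add]
  group

lemma between_axisPoint {n M k : ℕ} {g : F2} (hk : g.norm ≤ k)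
    (hk' : k + g.norm ≤ 2 * M * (n * (n + 1))) :
    Between ((g * wordW n * g⁻¹) ^ M)⁻¹ (axisPoint n g M k) ((g * wordW n * g⁻¹) ^ M) := by
  obtain ⟨l, hl⟩ := Nat.exists_eq_add_of_le (le_of_add_le_left hk')
  have hstart := wdist_self_mul ((g * wordW n * g⁻¹) ^ M)⁻¹ g
  have hend := wdist_self_mul ((g * wordW n * g⁻¹) ^ M) g
  rw [← axisPoint_zero, wdist_comm] at hstart
  rw [← axisPoint_two_mul, wdist_comm, hl] at hend
  have hdist (i m : ℕ) : wdist (axisPoint n g M i) (axisPoint n g M (i + m)) = m := by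
    rw [axisPoint_add, wdist_self_mul, norm_wFactor]
  have hpath : Between (axisPoint n g M 0) (axisPoint n g M k) (axisPoint n g M (k + l)) := by
    have h₁ := hdist 0 k
    have h₂ := hdist 0 (k + l)
    rw [zero_add] at h₁ h₂
    rw [Between, h₁, h₂, hdist]
  have hfrom := hpath.of_wdist_le (hstart.trans_le (by
    have := hdist 0 k
    rw [zero_add] at this
    lia))
  exact (hfrom.symm.of_wdist_le (hend.trans_le (by rw [wdist_comm, hdist]; lia))).symm

section AxisImage

variable {η : MulAut F2} {C n M : ℕ} {g u y : F2}

lemma wdist_map_axisPoint_le (hC : ∀ c, (η (.of c)).norm ≤ C) (k m : ℕ) :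
    wdist (η (axisPoint n g M k)) (η (axisPoint n g M (k + m))) ≤ m * C := by
  rw [axisPoint_add, map_mul, wdist_self_mul]
  exact (norm_map_le (f := η.toMonoidHom) hC _).trans_eq (by rw [norm_wFactor])

lemma AxisPrefix.between_map_axisPoint (h : AxisPrefix u (η (g * wordW n * g⁻¹)))
    (hC : ∀ c, (η (.of c)).norm ≤ C) (hM : 1 ≤ M) {a b : ℕ} (hab : b + a = 2 * M * (n * (n + 1)))
    (hlarge : (η g).norm + a * C + u.norm ≤ (η (g * wordW n * g⁻¹) ^ M).norm) :
    Between (η (axisPoint n g M a)) 1 u ∧ Between 1 u (η (axisPoint n g M b)) := by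
  obtain ⟨hstart, hend⟩ := h M hM
  set x := η (g * wordW n * g⁻¹) with hx
  refine ⟨hstart.of_wdist_le ?_, (hend.symm.of_wdist_le ?_).symm⟩
  · have hzero : η (axisPoint n g M 0) = (x ^ M)⁻¹ * η g := by
      rw [axisPoint_zero, map_mul, map_inv, map_pow]
    have htri := wdist_triangle (x ^ M)⁻¹ (η (axisPoint n g M 0)) (η (axisPoint n g M a))
    have hstep := wdist_map_axisPoint_le (n := n) (g := g) (M := M) hC 0 a
    rw [zero_add] at hstep
    rw [hzero, wdist_self_mul, ← hzero] at htri
    rw [wdist_comm _ 1, one_wdist, FreeGroup.norm_inv_eq]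
    lia
  · have hlast : η (axisPoint n g M (b + a)) = x ^ M * η g := by
      rw [hab, axisPoint_two_mul, map_mul, map_pow]
    have htri := wdist_triangle (x ^ M) (η (axisPoint n g M (b + a))) (η (axisPoint n g M b))
    have hstep := wdist_map_axisPoint_le (n := n) (g := g) (M := M) hC b a
    rw [hlast, wdist_self_mul, ← hlast, wdist_comm (η (axisPoint n g M (b + a)))] at htri
    rw [Between, one_wdist, one_wdist] at hend
    rw [wdist_comm _ u]
    lia

lemma AxisPrefix.norm_add_wdist_le (hη : BoundedCancellation η C)
    (h : AxisPrefix u (η (g * wordW n * g⁻¹))) (hM : 1 ≤ M) {k : ℕ} (hk : g.norm ≤ k)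
    (hk' : k + g.norm ≤ 2 * M * (n * (n + 1)))
    (hlt : wdist (η (axisPoint n g M k)) u < (η (axisPoint n g M k)).norm + u.norm)
    (hlt' : (η (axisPoint n g M k)).norm < wdist (η (axisPoint n g M k)) u + u.norm) :
    (η (axisPoint n g M k)).norm + wdist (η (axisPoint n g M k)) u ≤ u.norm + 2 * C := by
  have hnear := hη _ _ _ (between_axisPoint hk hk')
  rw [map_inv, map_pow] at hnear
  simpa only [one_wdist] using wdist_add_wdist_le_of_near (h M hM).1 (h M hM).2 hnear
    (by simpa only [one_wdist]) (by simpa only [one_wdist])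

lemma AxisPrefix.onAxis_of_between (hη : BoundedCancellation η C) {e e' v : F2}
    (hy : AxisPrefix u (η y)) (he : Between (η e) 1 u) (he' : Between 1 u (η e'))
    (hvu : wdist (η v) u + C < u.norm) (hv : (η v).norm + C < u.norm) (h : Between e v e') :
    OnAxis y v := fun N hN ↦
  hη.between_of_between he he' (by simpa using (hy N hN).1) (by simpa using (hy N hN).2) hvu hv h

lemma exists_window (hη : BoundedCancellation η C) (hC : ∀ c, (η (.of c)).norm ≤ C) (hn : 1 ≤ n)
    {R : ℕ} (hx : AxisPrefix u (η (g * wordW n * g⁻¹))) (hy : AxisPrefix u (η y))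
    (hR : C * (2 * R + 6) < u.norm) :
    ∃ M k₀, ∀ k, k₀ ≤ k + R → k ≤ k₀ + R → OnAxis y (axisPoint n g M k) := by
  have hu : u ≠ 1 := by rintro rfl; simp at hR
  have hx1 : η (g * wordW n * g⁻¹) ≠ 1 := fun h ↦ hu <| by
    simpa [Between, wdist_comm u, h, one_wdist] using (hx 1 le_rfl).2
  set a := R + g.norm with ha
  set M := (η g).norm + a * C + u.norm + a + 1 with hM
  have hlarge := add_norm_le_norm_pow_succ hx1 ((η g).norm + a * C + u.norm + a)
  rw [← hM] at hlarge
  have hperiods : M ≤ M * (n * (n + 1)) := Nat.le_mul_of_pos_right M (by positivity)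
  set b := 2 * M * (n * (n + 1)) - a with hb
  have hba : b + a = 2 * M * (n * (n + 1)) := by lia
  have hM1 : 1 ≤ M := by lia
  obtain ⟨hstart, hend⟩ := hx.between_map_axisPoint hC hM1 hba (by lia)
  obtain ⟨k₀, hak, hkb, hmid⟩ := exists_forall_near_midpoint (R := R) (by lia)
    (wdist_map_axisPoint_le hC) hu hstart hend
  refine ⟨M, k₀, fun k hk hk' ↦ ?_⟩
  obtain ⟨hle, hle'⟩ := hmid k hk hk'
  rw [show C * (2 * R + 6) = 2 * ((R + 1) * C) + 4 * C by ring] at hR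
  have hnear := hx.norm_add_wdist_le hη hM1 (k := k) (by lia) (by lia) (by lia) (by lia)
  exact hy.onAxis_of_between hη (by simpa using (hx M hM1).1) (by simpa using (hx M hM1).2)
    (by lia) (by lia) (between_axisPoint (by lia) (by lia))

end AxisImage

/-! ### Locating the pattern -/

lemma add_mod_of_mod_eq_mul_succ {n p m : ℕ} (hmn : m < n) (hp : p % (n * (n + 1)) = m * (m + 1)) :
    (p + (m + 1)) % (n * (n + 1)) = (m + 1) * (m + 1) := by
  rw [Nat.add_mod, hp, Nat.mod_eq_of_lt (show m + 1 < n * (n + 1) by nlinarith),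
    Nat.mod_eq_of_lt (by nlinarith)]
  ring

lemma wLetter_eq_false_of_add_one_mod_eq {n k m : ℕ} (hm : 1 ≤ m) (hmn : m ≤ n)
    (hk : (k + 1) % (n * (n + 1)) = m * (m + 1)) : wLetter n k = false := by
  have : m ≤ m * m := Nat.le_mul_of_pos_left m hm
  have hmod := mod_eq_sub_of_add_mod_eq (Nat.mul_pos (by lia) n.succ_pos) hk (by lia)
  rw [wLetter, hmod]
  exact infLetter_eq_false (m := m) (by lia) (by lia)

lemma pattern_eq_wFactor {n i k : ℕ} (hi : 2 ≤ i) (hin : i < n)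
    (hk : (k + 1) % (n * (n + 1)) = i * i - i) : pattern i = wFactor n k (pattern i).norm := by
  obtain ⟨m, rfl⟩ := Nat.exists_eq_add_of_le' (show 1 ≤ i by lia)
  rw [show (m + 1) * (m + 1) - (m + 1) = m * (m + 1) by rw [← Nat.sub_one_mul]; simp] at hk
  have hk₂ := add_mod_of_mod_eq_mul_succ (by lia) hk
  have hk₃ := add_mod_of_mod_eq_sq hin hk₂
  have hfirst : Run n k 1 false := fun j hj ↦ by
    rw [Nat.lt_one_iff.1 hj]
    exact wLetter_eq_false_of_add_one_mod_eq (by lia) (by lia) hk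
  rw [norm_pattern, wFactor_add, wFactor_add, wFactor_add, pattern, genA, genB,
    hfirst.of_pow_eq, (run_true_of_mod_eq (by lia) hk).of_pow_eq,
    (run_false_of_mod_eq hin.le hk₂).of_pow_eq, (run_true_of_mod_eq hin hk₃).of_pow_eq]
  simp only [mul_assoc, add_assoc]

lemma exists_pattern_near {n : ℕ} (hn : 48 ≤ n) (k₀ : ℕ) :
    ∃ i k, 9 ≤ i ∧ i < n ∧ (k + 1) % (n * (n + 1)) = i * i - i ∧ k₀ ≤ k + (3 * n + 5) ∧
      k + (pattern i).norm ≤ k₀ + (3 * n + 5) := by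
  set ℓ := n * (n + 1)
  have hr := Nat.mod_lt k₀ (show ℓ > 0 by positivity)
  have hk₀ := Nat.div_add_mod k₀ ℓ
  set q := k₀ / ℓ
  set s := (k₀ % ℓ).sqrt
  have hsq : s * s ≤ k₀ % ℓ := Nat.sqrt_le _
  have hsq' : k₀ % ℓ < (s + 1) * (s + 1) := Nat.lt_succ_sqrt _
  have hmod (Q c : ℕ) (hc : c < ℓ) : (ℓ * Q + c) % ℓ = c := by
    rw [Nat.mul_add_mod, Nat.mod_eq_of_lt hc]
  have hn' : 48 * n ≤ n * n := Nat.mul_le_mul_right n hn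
  simp only [norm_pattern]
  rcases lt_or_ge s 9 with hs9 | hs9
  · exact ⟨9, ℓ * q + 71, by lia, by lia, hmod q 72 (by lia), by nlinarith, by lia⟩
  rcases lt_or_ge s n with hsn | hsn
  · have hpos : 9 * s ≤ s * s := Nat.mul_le_mul_right s hs9
    have : s * s ≤ n * n := Nat.mul_le_mul hsn.le hsn.le
    refine ⟨s, ℓ * q + (s * s - s - 1), hs9, hsn, ?_, by lia, by lia⟩
    rw [add_assoc, Nat.sub_add_cancel (by lia)]
    exact hmod q _ (by lia)
  · have hlast : n * n ≤ s * s := Nat.mul_le_mul hsn hsn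
    exact ⟨9, ℓ * (q + 1) + 71, by lia, by lia, hmod (q + 1) 72 (by lia), by lia, by lia⟩

lemma eq_conj_wordW_of_onAxis_window {n M k₀ : ℕ} {ψ : MulAut F2} {g z κ : F2} (hn : 48 ≤ n)
    (hz : ψ z = κ * wordW n * κ⁻¹)
    (hwindow : ∀ k, k₀ ≤ k + (3 * n + 5) → k ≤ k₀ + (3 * n + 5) → OnAxis z (axisPoint n g M k)) :
    z = g * wordW n * g⁻¹ := by
  obtain ⟨c, hc⟩ := exists_tame_conj_mul ψ
  obtain ⟨i, k, hi, hin, hk, hlo, hhi⟩ := exists_pattern_near hn k₀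
  have hz' : (MulAut.conj c * ψ) z = (c * κ) * wordW n * (c * κ)⁻¹ := by
    rw [MulAut.mul_apply, hz, MulAut.conj_apply]
    group
  have hend := hwindow (k + (pattern i).norm) (by lia) hhi
  rw [axisPoint_add, ← pattern_eq_wFactor (by lia) hin hk] at hend
  obtain ⟨g', k', rfl, hpoint, hk'⟩ :=
    exists_eq_conj_wordW_of_onAxis hi hin hc hz' (hwindow k hlo (by lia)) hend
  have hmod : k' ≡ k [MOD n * (n + 1)] := Nat.ModEq.add_right_cancel' 1 (hk'.trans hk.symm)
  rw [conj_wordW_eq_of_mul_wFactor_eq hpoint.symm hmod]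
  group

/-! ### Small cancellation -/

section AxisPrefix

variable {α : Type*} [DecidableEq α] {u x : FreeGroup α}

lemma axisPrefix_of_norm_sq (hx : (x ^ 2).norm = 2 * x.norm) (hu : Between 1 u x) :
    AxisPrefix u x := by
  intro M hM
  obtain ⟨m, rfl⟩ := Nat.exists_eq_add_of_le' hM
  have hpow := norm_pow_of_norm_sq hx
  have hx' : wdist u x + u.norm = x.norm := by
    rw [Between, one_wdist, one_wdist] at hu
    lia
  constructor
  · have hsucc : wdist (x ^ (m + 1))⁻¹ x = (m + 2) * x.norm := by
      rw [wdist, inv_inv, ← pow_succ, hpow]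
    have h₁ := wdist_triangle (x ^ (m + 1))⁻¹ u x
    have h₂ := wdist_triangle (x ^ (m + 1))⁻¹ 1 u
    have h₃ : wdist (x ^ (m + 1))⁻¹ 1 = (m + 1) * x.norm := by
      rw [wdist_comm, one_wdist, FreeGroup.norm_inv_eq, hpow]
    rw [Between, one_wdist] at *
    lia
  · have h₁ := wdist_triangle u x (x ^ (m + 1))
    have h₂ := wdist_triangle 1 u (x ^ (m + 1))
    rw [pow_succ', wdist_self_mul, hpow, ← pow_succ'] at h₁
    rw [Between, one_wdist, one_wdist, hpow] at *
    lia

end AxisPrefix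

lemma IsInitSeg.between {u x : F2} (h : IsInitSeg u x) : Between 1 u x := by
  obtain ⟨v, rfl, hnorm⟩ := h
  exact between_one_mul.2 hnorm

lemma CyclRed.translationLength_eq {x : F2} (h : CyclRed x) : translationLength x = x.norm := by
  obtain ⟨g, hg⟩ := exists_norm_conj_eq_translationLength x
  have hle : x.norm ≤ translationLength x := (h g).trans_eq hg
  have hsq := norm_pow_succ x 1
  have := FreeGroup.norm_mul_le x x
  rw [pow_two] at hsq
  lia

lemma CyclRed.norm_sq {x : F2} (h : CyclRed x) : (x ^ 2).norm = 2 * x.norm := by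
  rw [norm_pow_succ x 1, h.translationLength_eq]
  ring

lemma Tame.mul_imageNorm_lt {η : MulAut F2} {n : ℕ} {u : F2} (hη : Tame η) (hn : 101 < n)
    (hu : translationLength (η (wordW n)) ≤ 6 * u.norm) :
    imageNorm η * (2 * (3 * n + 5) + 6) < u.norm := by
  have hlen := hη.mul_imageNorm_le_translationLength n
  have hpos : 0 < imageNorm η := Nat.add_pos_left (norm_map_pos genA_ne_one) _
  by_contra! hle
  have hquad : n * (n + 1) * imageNorm η ≤ (80 * n + 196) * imageNorm η := by lia
  have := Nat.le_of_mul_le_mul_right hquad hpos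
  nlinarith

lemma Tame.eq_of_axisPrefix {η η' : MulAut F2} {n : ℕ} {g u y z κ : F2} (hη : Tame η)
    (hn : 101 < n) (hx : AxisPrefix u (η (g * wordW n * g⁻¹))) (hy : AxisPrefix u y)
    (hz : z = y ∨ z = y⁻¹) (hzκ : z = η' (κ * wordW n * κ⁻¹))
    (hu : translationLength (η (wordW n)) ≤ 6 * u.norm) : z = η (g * wordW n * g⁻¹) := by
  have hC (c : Bool) : (η (.of c)).norm ≤ imageNorm η := by
    cases c
    exacts [Nat.le_add_left _ _, Nat.le_add_right _ _]
  obtain ⟨M, k₀, hwindow⟩ := exists_window (y := η⁻¹ y) hη.boundedCancellation hC (by lia) hx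
    (by rwa [MulAut.apply_inv_self]) (hη.mul_imageNorm_lt hn hu)
  have hpre : η⁻¹ z = g * wordW n * g⁻¹ := by
    refine eq_conj_wordW_of_onAxis_window (ψ := η'⁻¹ * η) (κ := κ) (M := M) (k₀ := k₀) (by lia)
      (by rw [hzκ, MulAut.mul_apply, MulAut.apply_inv_self, MulAut.inv_apply_self])
      fun k hk hk' ↦ ?_
    rcases hz with rfl | rfl
    · exact hwindow k hk hk'
    · exact map_inv η⁻¹ y ▸ (hwindow k hk hk').inv
  rw [← hpre, MulAut.apply_inv_self]

lemma exists_eq_map_conj_of_isConj {G : Type*} [Group G] {η : MulAut G} {w x : G}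
    (h : IsConj (η w) x) : ∃ g, x = η (g * w * g⁻¹) := by
  obtain ⟨c, rfl⟩ := isConj_iff.1 h
  exact ⟨η⁻¹ c, by rw [map_mul, map_mul, map_inv, MulAut.apply_inv_self]⟩

lemma CyclRed.eq_one_of_isInitSeg_inv {u x : F2} (hx : CyclRed x) (h : IsInitSeg u x)
    (h' : IsInitSeg u x⁻¹) : u = 1 := by
  have hleft := (axisPrefix_of_norm_sq hx.norm_sq h.between 1 le_rfl).1
  have hright := h'.between
  rw [pow_one, Between, wdist_comm _ 1, wdist_comm x⁻¹ u, one_wdist, one_wdist] at hleft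
  rw [Between, one_wdist, one_wdist] at hright
  exact FreeGroup.norm_eq_zero.1 (by lia)

lemma eq_of_isConj_of_mem_tildeSet {n : ℕ} (hn : 101 < n) {η : MulAut F2} {T : Set (MulAut F2)}
    {u x y : F2} (hx : CyclRed x) (hconj : IsConj (η (wordW n)) x)
    (hy : y ∈ tildeSet ((fun η ↦ η (wordW n)) '' T)) (hux : IsInitSeg u x) (huy : IsInitSeg u y)
    (hlen : x.norm ≤ 6 * u.norm) : x = y := by
  obtain ⟨hy, _, ⟨η', -, rfl⟩, hconj'⟩ := hy
  obtain ⟨c, hc⟩ := exists_tame_conj_mul η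
  have hconj₀ : IsConj ((MulAut.conj c * η) (wordW n)) x :=
    (isConj_iff.2 ⟨c, rfl⟩ : IsConj (η (wordW n)) _).symm.trans hconj
  have htrans : translationLength ((MulAut.conj c * η) (wordW n)) ≤ 6 * u.norm := by
    obtain ⟨d, rfl⟩ := isConj_iff.1 hconj₀
    rwa [← hx.translationLength_eq, translationLength_conj] at hlen
  obtain ⟨g, hg⟩ := exists_eq_map_conj_of_isConj hconj₀
  have haxis := axisPrefix_of_norm_sq hx.norm_sq hux.between
  have heq (z : F2) (hz : z = y ∨ z = y⁻¹) (hconjz : IsConj (η' (wordW n)) z) : z = x := by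
    obtain ⟨κ, hκ⟩ := exists_eq_map_conj_of_isConj hconjz
    rw [hg]
    exact hc.eq_of_axisPrefix hn (hg ▸ haxis) (axisPrefix_of_norm_sq hy.norm_sq huy.between) hz hκ
      htrans
  rcases hconj' with h | h
  · exact (heq y (.inl rfl) h).symm
  · have hinv : y⁻¹ = x := heq y⁻¹ (.inr rfl) (isConj_iff.2 ?_)
    · obtain rfl := hx.eq_one_of_isInitSeg_inv hux (by rwa [← hinv, inv_inv])
      obtain rfl : x = 1 := FreeGroup.norm_eq_zero.1 (by simpa using hlen)
      exact (inv_eq_one.1 hinv).symm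
    · obtain ⟨d, rfl⟩ := isConj_iff.1 h
      exact ⟨d, by group⟩

lemma CyclRed.of_isConj {x z : F2} (h : CyclRed x) (hconj : IsConj x z) (hle : z.norm ≤ x.norm) :
    CyclRed z := by
  obtain ⟨c, rfl⟩ := isConj_iff.1 hconj
  intro g
  have := h (g * c)
  rw [show g * c * x * (g * c)⁻¹ = g * (c * x * c⁻¹) * g⁻¹ by group] at this
  exact hle.trans this

lemma CyclRed.inv {x : F2} (h : CyclRed x) : CyclRed x⁻¹ := fun g ↦ by
  have hconj : (g * x⁻¹ * g⁻¹).norm = (g * x * g⁻¹).norm := by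
    rw [← FreeGroup.norm_inv_eq, conj_inv, inv_inv]
  exact (FreeGroup.norm_inv_eq.trans_le (h g)).trans_eq hconj.symm

lemma mem_tildeSet_of_isConj_inv {S : Set F2} {x z : F2} (hx : x ∈ tildeSet S)
    (hconj : IsConj x⁻¹ z) (hle : z.norm ≤ x.norm) : z ∈ tildeSet S := by
  obtain ⟨hred, s, hs, h⟩ := hx
  have hinv {t : F2} (ht : IsConj t x) : IsConj t⁻¹ z := by
    obtain ⟨c, rfl⟩ := isConj_iff.1 ht
    exact (isConj_iff.2 ⟨c, conj_inv.symm⟩).trans hconj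
  refine ⟨hred.inv.of_isConj hconj (by rwa [FreeGroup.norm_inv_eq]), s, hs, h.symm.imp ?_ hinv⟩
  exact fun h ↦ inv_inv s ▸ hinv h

-- Reading the segment `u` of the axis of `x` backwards gives the segment `u⁻¹` of the axis of
-- `u⁻¹ x⁻¹ u`; this exchanges conjugates of `s` and of `s⁻¹`.
lemma CyclRed.isInitSeg_conj_inv {u x : F2} (hx : CyclRed x) (h : IsInitSeg u x) :
    IsInitSeg u⁻¹ (u⁻¹ * x⁻¹ * u) ∧ (u⁻¹ * x⁻¹ * u).norm = x.norm := by
  have hge : x⁻¹.norm ≤ (u⁻¹ * x⁻¹ * u⁻¹⁻¹).norm := hx.inv u⁻¹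
  obtain ⟨v, rfl, hnorm⟩ := h
  have heq : u⁻¹ * (u * v)⁻¹ * u = u⁻¹ * v⁻¹ := by group
  have hle := FreeGroup.norm_mul_le u⁻¹ v⁻¹
  have hnorm' : (u * v).norm = u⁻¹.norm + v⁻¹.norm := by
    rw [FreeGroup.norm_inv_eq, FreeGroup.norm_inv_eq]
    exact hnorm
  rw [FreeGroup.norm_inv_eq, inv_inv, heq] at hge
  rw [heq]
  exact ⟨⟨v⁻¹, rfl, hle.antisymm (hnorm' ▸ hge)⟩, (hle.trans_eq hnorm'.symm).antisymm hge⟩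

lemma eq_of_mem_tildeSet {n : ℕ} (hn : 101 < n) {T : Set (MulAut F2)} {u x y : F2}
    (hx : x ∈ tildeSet ((fun η ↦ η (wordW n)) '' T))
    (hy : y ∈ tildeSet ((fun η ↦ η (wordW n)) '' T)) (hux : IsInitSeg u x) (huy : IsInitSeg u y)
    (hlen : x.norm ≤ 6 * u.norm) : x = y := by
  obtain ⟨hxred, _, ⟨η, -, rfl⟩, hconj | hconj⟩ := hx
  · exact eq_of_isConj_of_mem_tildeSet hn hxred hconj hy hux huy hlen
  obtain ⟨hux', hxnorm⟩ := hxred.isInitSeg_conj_inv hux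
  obtain ⟨huy', hynorm⟩ := hy.1.isInitSeg_conj_inv huy
  have hflip (z : F2) : IsConj z⁻¹ (u⁻¹ * z⁻¹ * u) := isConj_iff.2 ⟨u⁻¹, by group⟩
  have hconj' : IsConj (η (wordW n)) (u⁻¹ * x⁻¹ * u) := by
    obtain ⟨c, rfl⟩ := isConj_iff.1 hconj
    exact isConj_iff.2 ⟨u⁻¹ * c, by group⟩
  have heq := eq_of_isConj_of_mem_tildeSet hn (hxred.inv.of_isConj (hflip x) (by simp [hxnorm]))
    hconj' (mem_tildeSet_of_isConj_inv hy (hflip y) hynorm.le) hux' huy'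
    (by simpa [hxnorm] using hlen)
  exact inv_injective (mul_left_cancel (mul_right_cancel heq))

lemma exists_isLeftTransversal {Δ : Type*} [Group Δ] (Γ : Subgroup Δ) :
    ∃ T, IsLeftTransversal Γ T := by
  refine ⟨Set.range (Quotient.out : Δ ⧸ Γ → Δ), fun d ↦
    ⟨(d : Δ ⧸ Γ).out, ⟨⟨_, rfl⟩, QuotientGroup.eq.1 (QuotientGroup.out_eq' _).symm⟩, ?_⟩⟩
  rintro _ ⟨⟨q, rfl⟩, hq⟩
  rw [QuotientGroup.eq.2 hq, QuotientGroup.out_eq']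

theorem transversal_small_cancellation_general (n : ℕ) (hn : 101 < n) (T : Set (MulAut F2)) :
    C'sixth ((fun η : MulAut F2 => η (wordW n)) '' T) := by
  intro x hx y hy hne u hux huy
  by_contra! hle
  rcases min_le_iff.1 hle with hle | hle
  · exact hne (eq_of_mem_tildeSet hn hx hy hux huy hle)
  · exact hne (eq_of_mem_tildeSet hn hy hx huy hux hle).symm

/-- **Theorem 1.6 / 8.23.** There is a transversal `T` for the left cosets of `F₂` (the inner
automorphisms) in `Aut(F₂)` such that, for `w = a b a² b² ⋯ aⁿ bⁿ` with `n > 101`, the set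
`{η(w) : η ∈ T}` satisfies the `C'(1/6)` small cancellation property. -/
theorem transversal_small_cancellation (n : ℕ) (hn : 101 < n) :
    ∃ T : Set (MulAut F2), IsLeftTransversal innerF2 T ∧
      C'sixth ((fun η : MulAut F2 => η (wordW n)) '' T) := by
  obtain ⟨T, hT⟩ := exists_isLeftTransversal innerF2
  exact ⟨T, hT, transversal_small_cancellation_general n hn T⟩

end IRSPaper
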